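/- Let φ be a meromorphic Jacobi form of weight k and index m with poles supported on S, all poles being simple. Then: (1) the canonical Fourier coefficients satisfy h_{ℓ+2m} = h_ℓ for all ℓ ∈ ℤ; (2) for each s ∈ S the product D_s(τ)·A^s_m(τ,z) depends only on the class of s in S/ℤ²; and (3) for all τ ∈ ℍ and all z ∈ ℂ with z ≠ z_s for every s ∈ S, one has φ(τ,z) = φ^F(τ,z) + ∑_{s ∈ S/ℤ²} D_s(τ)·A^s_m(τ,z), the sum taken over any set of representatives of S/ℤ². -/

import Mathlib

noncomputable section

open Complex Filter Topology MeasureTheory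
open scoped Classical

/-- `ee x = e^{2πix}`. -/
def ee (x : ℂ) : ℂ := Complex.exp (2 * (Real.pi : ℂ) * Complex.I * x)

/-- The index-`m` elliptic transformation law on `ℍ × ℂ`. -/
def EllipticLaw (m : ℕ) (φ : ℂ → ℂ → ℂ) : Prop :=
  ∀ τ : ℂ, 0 < τ.im → ∀ z : ℂ, ∀ lam mu : ℤ,
    φ τ (z + (lam : ℂ) * τ + (mu : ℂ)) =
      ee (-(m : ℂ) * ((lam : ℂ) ^ 2 * τ + 2 * (lam : ℂ) * z)) * φ τ z

/-- The weight-`k` index-`m` modular transformation law on `ℍ × ℂ`. -/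
def ModularLaw (k : ℤ) (m : ℕ) (φ : ℂ → ℂ → ℂ) : Prop :=
  ∀ τ : ℂ, 0 < τ.im → ∀ z : ℂ, ∀ a b c d : ℤ, a * d - b * c = 1 →
    φ (((a : ℂ) * τ + (b : ℂ)) / ((c : ℂ) * τ + (d : ℂ))) (z / ((c : ℂ) * τ + (d : ℂ))) =
      ((c : ℂ) * τ + (d : ℂ)) ^ k *
        ee ((m : ℂ) * (c : ℂ) * z ^ 2 / ((c : ℂ) * τ + (d : ℂ))) * φ τ z

/-- The theta function `θ_{m,ℓ}(τ,z) = ∑_{r ≡ ℓ (mod 2m)} q^{r²/4m} y^r`. -/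
def jTheta (m : ℕ) (l : ℤ) (τ z : ℂ) : ℂ :=
  ∑' n : ℤ, ee (((l : ℂ) + 2 * (m : ℂ) * (n : ℂ)) ^ 2 / (4 * (m : ℂ)) * τ +
      ((l : ℂ) + 2 * (m : ℂ) * (n : ℂ)) * z)

/-- The point `z_s = ατ + β` for `s = (α,β) ∈ ℚ²`. -/
def zpt (s : ℚ × ℚ) (τ : ℂ) : ℂ := (s.1 : ℚ) * τ + (s.2 : ℚ)

/-- A meromorphic Jacobi form of weight `k` and index `m` with poles supported on `S`. -/
structure MeroJacobiForm (k : ℤ) (m : ℕ) (S : Set (ℚ × ℚ)) where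
  toFun : ℂ → ℂ → ℂ
  lattice_inv : ∀ s ∈ S, ∀ lam mu : ℤ, (s.1 + (lam : ℚ), s.2 + (mu : ℚ)) ∈ S
  sl_inv : ∀ s ∈ S, ∀ a b c d : ℤ, a * d - b * c = 1 →
      (s.1 * (a : ℚ) + s.2 * (c : ℚ), s.1 * (b : ℚ) + s.2 * (d : ℚ)) ∈ S
  finite_classes : Set.Finite {s : ℚ × ℚ | s ∈ S ∧ 0 ≤ s.1 ∧ s.1 < 1 ∧ 0 ≤ s.2 ∧ s.2 < 1}
  elliptic : EllipticLaw m toFun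
  modular : ModularLaw k m toFun
  holo : ∀ τ : ℂ, 0 < τ.im → ∀ z : ℂ, (∀ s ∈ S, z ≠ zpt s τ) →
      DifferentiableAt ℂ (fun p : ℂ × ℂ => toFun p.1 p.2) (τ, z)
  merom : ∀ τ : ℂ, 0 < τ.im → ∀ s ∈ S, ∃ (g : ℂ → ℂ) (nn : ℕ), AnalyticAt ℂ g (zpt s τ) ∧
      ∀ᶠ z in 𝓝[≠] (zpt s τ), toFun τ z = g z / (z - zpt s τ) ^ nn

/-- All poles of `Φ` are simple (order at most 1). -/
def HasSimplePoles {k : ℤ} {m : ℕ} {S : Set (ℚ × ℚ)} (Φ : MeroJacobiForm k m S) : Prop :=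
  ∀ τ : ℂ, 0 < τ.im → ∀ s ∈ S, ∃ g : ℂ → ℂ, AnalyticAt ℂ g (zpt s τ) ∧
    ∀ᶠ z in 𝓝[≠] (zpt s τ), Φ.toFun τ z = g z / (z - zpt s τ)

/-- `h` is the family of canonical Fourier coefficients of `φ`:
`h_ℓ(τ) = q^{ℓ²/4m}·(1/2)·lim_{ε→0⁺} [∫₀¹ φ(τ, x+iε-ℓτ/2m) e(-ℓ(x+iε)) dx
  + ∫₀¹ φ(τ, x-iε-ℓτ/2m) e(-ℓ(x-iε)) dx]`. -/
def IsCanonCoeff (m : ℕ) (φ : ℂ → ℂ → ℂ) (h : ℤ → ℂ → ℂ) : Prop :=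
  ∀ l : ℤ, ∀ τ : ℂ, 0 < τ.im →
    Filter.Tendsto (fun ε : ℝ =>
        (1 / 2 : ℂ) *
          ((∫ x in (0:ℝ)..1,
              φ τ ((x : ℂ) + (ε : ℂ) * Complex.I - (l : ℂ) * τ / (2 * (m : ℂ))) *
                ee (-(l : ℂ) * ((x : ℂ) + (ε : ℂ) * Complex.I))) +
            ∫ x in (0:ℝ)..1,
              φ τ ((x : ℂ) - (ε : ℂ) * Complex.I - (l : ℂ) * τ / (2 * (m : ℂ))) *
                ee (-(l : ℂ) * ((x : ℂ) - (ε : ℂ) * Complex.I))))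
      (𝓝[>] (0 : ℝ)) (𝓝 (ee (-(l : ℂ) ^ 2 * τ / (4 * (m : ℂ))) * h l τ))

/-- `D s τ = 2πi·e(mα z_s)·Res_{z=z_s} φ(τ,z)`, characterized via the limit defining the
residue at a simple pole. -/
def IsResidueFactor (m : ℕ) (S : Set (ℚ × ℚ)) (φ : ℂ → ℂ → ℂ) (D : ℚ × ℚ → ℂ → ℂ) : Prop :=
  ∀ s ∈ S, ∀ τ : ℂ, 0 < τ.im →
    Filter.Tendsto (fun z : ℂ =>
        2 * (Real.pi : ℂ) * Complex.I * ee ((m : ℂ) * (s.1 : ℚ) * zpt s τ) *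
          ((z - zpt s τ) * φ τ z))
      (𝓝[≠] (zpt s τ)) (𝓝 (D s τ))

/-- The rational function `R_c`. -/
def Rc (c : ℝ) (y : ℂ) : ℂ :=
  if (⌈c⌉ : ℝ) = c then 1 / 2 * y ^ ⌈c⌉ * (y + 1) / (y - 1) else y ^ ⌈c⌉ / (y - 1)

/-- The index-`m` averaging operator `Av^{(m)}[F](τ,z) = ∑_{λ∈ℤ} q^{mλ²} y^{2mλ} F(q^λ y)`. -/
def Av (m : ℕ) (F : ℂ → ℂ) (τ z : ℂ) : ℂ :=
  ∑' lam : ℤ, ee ((m : ℂ) * (lam : ℂ) ^ 2 * τ + 2 * (m : ℂ) * (lam : ℂ) * z) *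
      F (ee ((lam : ℂ) * τ + z))

/-- The Appell–Lerch sum `A^s_m(τ,z) = e(-mα z_s)·Av^{(m)}[R_{-2mα}(y/y_s)]`. -/
def AppellA (m : ℕ) (s : ℚ × ℚ) (τ z : ℂ) : ℂ :=
  ee (-(m : ℂ) * (s.1 : ℚ) * zpt s τ) *
    Av m (fun w => Rc ((-(2 * (m : ℚ) * s.1) : ℚ) : ℝ) (w / ee (zpt s τ))) τ z

/-- The finite part `φ^F(τ,z) = ∑_{ℓ=0}^{2m-1} h_ℓ(τ)·θ_{m,ℓ}(τ,z)`. -/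
def finitePart (m : ℕ) (h : ℤ → ℂ → ℂ) (τ z : ℂ) : ℂ :=
  ∑ l ∈ Finset.range (2 * m), h (l : ℤ) τ * jTheta m (l : ℤ) τ z

/-- `T` is a set of representatives for `S/ℤ²`. -/
def IsRepSet (S : Set (ℚ × ℚ)) (T : Finset (ℚ × ℚ)) : Prop :=
  (↑T : Set (ℚ × ℚ)) ⊆ S ∧
    ∀ s ∈ S, ∃! t : ℚ × ℚ, t ∈ T ∧ ∃ lam mu : ℤ, s.1 = t.1 + (lam : ℚ) ∧ s.2 = t.2 + (mu : ℚ)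


/-!
Subtracting `∑ D_t·A^t_m` from `φ` cancels all residues, so the difference `ψ` extends to an entire
`1`-periodic function of `z`. It is the sum of its Fourier series, and its Fourier coefficients do
not depend on the horizontal line along which they are computed. On the line through `-ℓτ/2m` the
`ℓ`-th coefficient of `A^s_m`, averaged over the two sides of the line, vanishes: the `λ`-th term of
the average contributes a Fourier coefficient of `R_c(e(z))`, with `c = -2mα`, at a height where the
expansion of `R_c` on that side does not contain the monomial in question, except when the line
passes through a pole; then `c` is an integer and the two sides contribute `-1/2` and `1/2`. Hence
the `ℓ`-th coefficient of `ψ` is `q^{ℓ²/4m}·h_ℓ`, and grouping the series by residues modulo `2m`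
turns it into `φ^F`.
-/

section Exponential

lemma ee_add (a b : ℂ) : ee (a + b) = ee a * ee b := by
  simp only [ee, mul_add, Complex.exp_add]

lemma ee_neg (a : ℂ) : ee (-a) = (ee a)⁻¹ := by
  simp only [ee, mul_neg, Complex.exp_neg]

lemma ee_sub (a b : ℂ) : ee (a - b) = ee a / ee b := by
  rw [sub_eq_add_neg, ee_add, ee_neg, div_eq_mul_inv]

@[simp] lemma ee_ne_zero (a : ℂ) : ee a ≠ 0 := Complex.exp_ne_zero _

@[simp] lemma ee_zero : ee 0 = 1 := by simp [ee]

lemma ee_intCast_mul (n : ℤ) (a : ℂ) : ee (n * a) = ee a ^ n := by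
  rw [ee, ee, ← Complex.exp_int_mul]
  ring_nf

lemma ee_eq_one_iff {a : ℂ} : ee a = 1 ↔ ∃ n : ℤ, a = n := by
  rw [ee, Complex.exp_eq_one_iff]
  refine exists_congr fun n => ?_
  rw [mul_comm (n : ℂ), mul_right_inj' Complex.two_pi_I_ne_zero]

@[simp] lemma ee_intCast (n : ℤ) : ee n = 1 := ee_eq_one_iff.2 ⟨n, rfl⟩

@[simp] lemma ee_one : ee 1 = 1 := mod_cast ee_intCast 1

lemma ee_add_one (a : ℂ) : ee (a + 1) = ee a := by rw [ee_add, ee_one, mul_one]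

lemma ee_add_intCast (a : ℂ) (n : ℤ) : ee (a + n) = ee a := by
  rw [ee_add, ee_intCast, mul_one]

lemma ee_intCast_mul_add_one (n : ℤ) (a : ℂ) : ee (n * (a + 1)) = ee (n * a) := by
  rw [ee_intCast_mul, ee_add_one, ee_intCast_mul]

lemma norm_ee (a : ℂ) : ‖ee a‖ = Real.exp (-(2 * Real.pi * a.im)) := by
  simp [ee, Complex.norm_exp]

lemma hasDerivAt_ee (a : ℂ) : HasDerivAt ee (2 * Real.pi * I * ee a) a := by
  have h := ((hasDerivAt_id a).const_mul (2 * Real.pi * I)).cexp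
  rwa [mul_one, mul_comm (cexp _)] at h

@[fun_prop] lemma differentiable_ee : Differentiable ℂ ee :=
  fun a => (hasDerivAt_ee a).differentiableAt

@[fun_prop] lemma continuous_ee : Continuous ee := differentiable_ee.continuous

end Exponential

section LineCoeff

/-- The `n`-th Fourier coefficient `∫₀¹ f(x + w) e(-n(x + w)) dx` of a `1`-periodic function `f`
along the horizontal line through `w`. -/
def lineCoeff (f : ℂ → ℂ) (n : ℤ) (w : ℂ) : ℂ :=
  ∫ x in (0 : ℝ)..1, f (x + w) * ee (-n * (x + w))

variable {f g : ℂ → ℂ} {n : ℤ} {w : ℂ}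

lemma lineCoeff_congr (h : ∀ x : ℝ, f (x + w) = g (x + w)) :
    lineCoeff f n w = lineCoeff g n w := by
  simp only [lineCoeff, h]

lemma lineCoeff_const_mul (a : ℂ) (f : ℂ → ℂ) (n : ℤ) (w : ℂ) :
    lineCoeff (fun z => a * f z) n w = a * lineCoeff f n w := by
  simp only [lineCoeff, mul_assoc, intervalIntegral.integral_const_mul]

lemma intervalIntegrable_lineCoeff (hf : Continuous fun x : ℝ => f (x + w)) :
    IntervalIntegrable (fun x : ℝ => f (x + w) * ee (-n * (x + w))) volume 0 1 :=
  (hf.mul (by fun_prop)).intervalIntegrable 0 1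

lemma lineCoeff_add (hf : Continuous fun x : ℝ => f (x + w))
    (hg : Continuous fun x : ℝ => g (x + w)) :
    lineCoeff (fun z => f z + g z) n w = lineCoeff f n w + lineCoeff g n w := by
  simp only [lineCoeff, add_mul]
  exact intervalIntegral.integral_add (intervalIntegrable_lineCoeff hf)
    (intervalIntegrable_lineCoeff hg)

lemma lineCoeff_finsetSum {ι : Type*} {s : Finset ι} {f : ι → ℂ → ℂ}
    (hf : ∀ i ∈ s, Continuous fun x : ℝ => f i (x + w)) :
    lineCoeff (fun z => ∑ i ∈ s, f i z) n w = ∑ i ∈ s, lineCoeff (f i) n w := by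
  simp only [lineCoeff, Finset.sum_mul]
  exact intervalIntegral.integral_finsetSum fun i hi => intervalIntegrable_lineCoeff (hf i hi)

lemma lineCoeff_ee_mul (f : ℂ → ℂ) (k n : ℤ) (w : ℂ) :
    lineCoeff (fun z => ee (k * z) * f z) n w = lineCoeff f (n - k) w := by
  refine intervalIntegral.integral_congr fun x _ => ?_
  simp only
  rw [mul_right_comm, mul_comm, ← ee_add]
  congr 2
  push_cast
  ring

lemma lineCoeff_comp_add_left (f : ℂ → ℂ) (n : ℤ) (a w : ℂ) :
    lineCoeff (fun z => f (a + z)) n w = ee (n * a) * lineCoeff f n (a + w) := by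
  rw [lineCoeff, lineCoeff, ← intervalIntegral.integral_const_mul]
  refine intervalIntegral.integral_congr fun x _ => ?_
  change f (a + (x + w)) * _ = _ * (f (x + (a + w)) * _)
  rw [mul_left_comm, ← ee_add, add_left_comm]
  congr 2
  ring

lemma lineCoeff_comp_neg (hf : Function.Periodic f 1) (n : ℤ) (w : ℂ) :
    lineCoeff (fun z => f (-z)) n w = lineCoeff f (-n) (-w) := by
  have hreflect := intervalIntegral.integral_comp_sub_left (a := 0) (b := 1)
    (fun x : ℝ => f (x + -w) * ee (-(-n : ℤ) * (x + -w))) 1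
  rw [sub_self, sub_zero] at hreflect
  rw [lineCoeff, lineCoeff, ← hreflect]
  refine intervalIntegral.integral_congr fun x _ => ?_
  have hx : ((1 - x : ℝ) : ℂ) + -w = -(x + w) + 1 := by push_cast; ring
  change f (-(x + w)) * _ = f (((1 - x : ℝ) : ℂ) + -w) * ee (_ * (((1 - x : ℝ) : ℂ) + -w))
  rw [hx, hf, ← Int.cast_neg (-n), ee_intCast_mul_add_one]
  congr 2
  push_cast
  ring

lemma lineCoeff_zero_comp_ee {G : ℂ → ℂ} (hG : DifferentiableOn ℂ G (Metric.ball 0 1))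
    (hw : 0 < w.im) : lineCoeff (fun z => G (ee z)) 0 w = G 0 := by
  have hnorm : ‖ee w‖ < 1 := by
    rw [norm_ee, Real.exp_lt_one_iff]
    nlinarith [Real.pi_pos]
  have hcont : DiffContOnCl ℂ (fun u => G (ee w * u)) (Metric.ball 0 |1|) := by
    refine DifferentiableOn.diffContOnCl (hG.comp (by fun_prop) fun u hu => ?_)
    rw [abs_one, closure_ball _ one_ne_zero, mem_closedBall_zero_iff] at hu
    rw [mem_ball_zero_iff, norm_mul]
    nlinarith [norm_nonneg (ee w)]
  have hmean := hcont.circleAverage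
  have hscale := intervalIntegral.integral_comp_mul_left (a := 0) (b := 1)
    (fun θ : ℝ => G (ee w * circleMap 0 1 θ)) Real.two_pi_pos.ne'
  rw [mul_zero, mul_one] at hscale
  rw [Real.circleAverage_def, ← hscale, mul_zero] at hmean
  rw [← hmean, lineCoeff]
  refine intervalIntegral.integral_congr fun x _ => ?_
  have hx : circleMap 0 1 (2 * Real.pi * x) = ee x := by
    simp [circleMap, ee, mul_right_comm]
  simp only [hx, ← ee_add, add_comm w, Int.cast_zero, neg_zero, zero_mul, ee_zero, mul_one]

end LineCoeff

section EntirePeriodic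

variable {f : ℂ → ℂ}

lemma integral_add_eq_of_differentiable (hf : Differentiable ℂ f) (hper : Function.Periodic f 1)
    (w w' : ℂ) : ∫ x in (0 : ℝ)..1, f (x + w) = ∫ x in (0 : ℝ)..1, f (x + w') := by
  obtain ⟨P, hP⟩ := hf.isExactOn_univ
  replace hP : ∀ z, HasDerivAt P (f z) z := fun z => hP z (Set.mem_univ z)
  have hint : ∀ w : ℂ, ∫ x in (0 : ℝ)..1, f (x + w) = P (w + 1) - P w := by
    intro w
    have hderiv : ∀ x ∈ Set.uIcc (0 : ℝ) 1,
        HasDerivAt (fun x : ℝ => P (x + w)) (f (x + w)) x := fun x _ =>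
      HasDerivAt.comp_ofReal (e := fun y => P (y + w)) ((hP _).comp_add_const _ _)
    have hcont : Continuous fun x : ℝ => f (x + w) := hf.continuous.comp (by fun_prop)
    rw [intervalIntegral.integral_eq_sub_of_hasDerivAt hderiv (hcont.intervalIntegrable _ _)]
    simp [add_comm]
  have hconst : ∀ w, HasDerivAt (fun w => P (w + 1) - P w) 0 w := by
    intro w
    have h := ((hP (w + 1)).comp_add_const w 1).sub (hP w)
    rwa [hper, sub_self] at h
  rw [hint, hint]
  exact is_const_of_deriv_eq_zero (fun w => (hconst w).differentiableAt)
    (fun w => (hconst w).deriv) w w'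

lemma lineCoeff_eq_of_differentiable (hf : Differentiable ℂ f) (hper : Function.Periodic f 1)
    (n : ℤ) (w w' : ℂ) : lineCoeff f n w = lineCoeff f n w' := by
  refine integral_add_eq_of_differentiable (f := fun z => f z * ee (-n * z)) (by fun_prop)
    (fun z => ?_) w w'
  change f (z + 1) * ee (-n * (z + 1)) = f z * ee (-n * z)
  rw [hper, ← Int.cast_neg, ee_intCast_mul_add_one]

lemma hasSum_lineCoeff_mul_ee (hf : Continuous f) (hper : Function.Periodic f 1) (z : ℂ)
    (hs : Summable fun n : ℤ => lineCoeff f n z * ee (n * z)) :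
    HasSum (fun n : ℤ => lineCoeff f n z * ee (n * z)) (f z) := by
  have : Fact ((0 : ℝ) < 1) := ⟨one_pos⟩
  have hperiodic : Function.Periodic (fun x : ℝ => f (x + z)) 1 := fun x => by
    simpa [add_right_comm] using hper (x + z)
  have hcont : Continuous fun x : ℝ => f (x + z) := by fun_prop
  let F : C(AddCircle (1 : ℝ), ℂ) := ⟨hperiodic.lift, continuous_coinduced_dom.2 hcont⟩
  have hF : ∀ x : ℝ, F (x : AddCircle (1 : ℝ)) = f (x + z) := hperiodic.lift_coe
  have hcoeff : ∀ n : ℤ, fourierCoeff F n = lineCoeff f n z * ee (n * z) := by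
    intro n
    rw [fourierCoeff_eq_intervalIntegral F n 0, lineCoeff, ← intervalIntegral.integral_mul_const]
    simp only [zero_add, div_one, one_smul, hF, smul_eq_mul]
    refine intervalIntegral.integral_congr fun x _ => ?_
    rw [mul_assoc, ← ee_add, mul_comm, fourier_coe_apply, ee]
    congr 2
    push_cast
    ring
  have h := has_pointwise_sum_fourier_series_of_summable (f := F)
    (hs.congr fun n => (hcoeff n).symm) ((0 : ℝ) : AddCircle (1 : ℝ))
  rw [hF, ofReal_zero, zero_add] at h
  simpa [hcoeff, fourier_coe_apply] using h

end EntirePeriodic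

section MeanFourierCoeff

/-- The filter of horizontal lines just above and just below `w`: its sets contain the lines
`w ± εi + ℝ` for all small `ε > 0`. -/
def nearLine (w : ℂ) : Filter ℂ :=
  map (fun p : ℝ × ℝ => p.2 + (w + p.1 * I)) (𝓝[>] 0 ×ˢ ⊤) ⊔
    map (fun p : ℝ × ℝ => p.2 + (w - p.1 * I)) (𝓝[>] 0 ×ˢ ⊤)

/-- `a` is the limit, as the lines `w ± εi + ℝ` approach `w + ℝ`, of the mean of the `l`-th Fourier
coefficients of `f` along them; poles of `f` on the line `w + ℝ` itself are allowed. -/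
def IsMeanFourierCoeff (f : ℂ → ℂ) (l : ℤ) (w a : ℂ) : Prop :=
  Tendsto (fun ε : ℝ => 1 / 2 * (lineCoeff f l (w + ε * I) + lineCoeff f l (w - ε * I)))
    (𝓝[>] 0) (𝓝 a)

variable {f g : ℂ → ℂ} {l : ℤ} {w a b : ℂ}

lemma eventually_nearLine_iff {P : ℂ → Prop} :
    (∀ᶠ z in nearLine w, P z) ↔
      ∀ᶠ ε : ℝ in 𝓝[>] 0, ∀ x : ℝ, P (x + (w + ε * I)) ∧ P (x + (w - ε * I)) := by
  simp only [nearLine, eventually_sup, eventually_map, ← principal_univ,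
    eventually_prod_principal_iff, Set.mem_univ, true_imp_iff, forall_and, eventually_and]

lemma IsMeanFourierCoeff.unique (ha : IsMeanFourierCoeff f l w a)
    (hb : IsMeanFourierCoeff f l w b) : a = b :=
  tendsto_nhds_unique ha hb

lemma IsMeanFourierCoeff.congr (hf : IsMeanFourierCoeff f l w a) (h : f =ᶠ[nearLine w] g) :
    IsMeanFourierCoeff g l w a := by
  refine Tendsto.congr' ((eventually_nearLine_iff.1 h).mono fun ε hε => ?_) hf
  rw [lineCoeff_congr fun x => (hε x).1, lineCoeff_congr fun x => (hε x).2]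

lemma IsMeanFourierCoeff.const_mul (c : ℂ) (hf : IsMeanFourierCoeff f l w a) :
    IsMeanFourierCoeff (fun z => c * f z) l w (c * a) := by
  refine (Tendsto.const_mul c hf).congr fun ε => ?_
  rw [lineCoeff_const_mul, lineCoeff_const_mul]
  ring

lemma continuous_add_of_forall_continuousAt (hf : ∀ x : ℝ, ContinuousAt f (x + w)) :
    Continuous fun x : ℝ => f (x + w) :=
  continuous_iff_continuousAt.2 fun x =>
    (hf x).comp (f := fun x : ℝ => (x + w : ℂ)) (by fun_prop)

lemma IsMeanFourierCoeff.add (hf : IsMeanFourierCoeff f l w a) (hg : IsMeanFourierCoeff g l w b)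
    (hfc : ∀ᶠ z in nearLine w, ContinuousAt f z) (hgc : ∀ᶠ z in nearLine w, ContinuousAt g z) :
    IsMeanFourierCoeff (fun z => f z + g z) l w (a + b) := by
  refine (Tendsto.add hf hg).congr' ?_
  filter_upwards [eventually_nearLine_iff.1 hfc, eventually_nearLine_iff.1 hgc] with ε hfε hgε
  rw [lineCoeff_add (continuous_add_of_forall_continuousAt fun x => (hfε x).1)
      (continuous_add_of_forall_continuousAt fun x => (hgε x).1),
    lineCoeff_add (continuous_add_of_forall_continuousAt fun x => (hfε x).2)
      (continuous_add_of_forall_continuousAt fun x => (hgε x).2)]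
  ring

lemma IsMeanFourierCoeff.finsetSum {ι : Type*} {T : Finset ι} {F : ι → ℂ → ℂ} {A : ι → ℂ}
    (hF : ∀ i ∈ T, IsMeanFourierCoeff (F i) l w (A i))
    (hFc : ∀ i ∈ T, ∀ᶠ z in nearLine w, ContinuousAt (F i) z) :
    IsMeanFourierCoeff (fun z => ∑ i ∈ T, F i z) l w (∑ i ∈ T, A i) := by
  refine (tendsto_finsetSum T hF).congr' ?_
  have h := (eventually_all_finset T).2 fun i hi => eventually_nearLine_iff.1 (hFc i hi)
  filter_upwards [h] with ε hε
  rw [lineCoeff_finsetSum fun i hi => continuous_add_of_forall_continuousAt fun x => (hε i hi x).1,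
    lineCoeff_finsetSum fun i hi => continuous_add_of_forall_continuousAt fun x => (hε i hi x).2,
    ← Finset.sum_add_distrib, Finset.mul_sum]

lemma isMeanFourierCoeff_of_differentiable (hf : Differentiable ℂ f) (hper : Function.Periodic f 1)
    (l : ℤ) (w : ℂ) : IsMeanFourierCoeff f l w (lineCoeff f l 0) := by
  refine tendsto_const_nhds.congr fun ε => ?_
  rw [lineCoeff_eq_of_differentiable hf hper l (w + ε * I) 0,
    lineCoeff_eq_of_differentiable hf hper l (w - ε * I) 0]
  ring

end MeanFourierCoeff

section RationalFunction

variable {n : ℤ} {w : ℂ}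

lemma Rc_eq (c : ℝ) {y : ℂ} (hy : y ≠ 0) :
    Rc c y = 1 / 2 * (y ^ ⌈c⌉ + y ^ (⌊c⌋ + 1)) * (y - 1)⁻¹ := by
  rw [Rc]
  split_ifs with hc
  · rw [← hc, Int.ceil_intCast, Int.floor_intCast, zpow_add_one₀ hy]
    ring
  · have hfloor : ⌊c⌋ + 1 = ⌈c⌉ := by
      refine ((Int.ceil_eq_floor_add_one_iff_notMem c).2 ?_).symm
      rintro ⟨j, rfl⟩
      simp at hc
    rw [hfloor]
    ring

lemma differentiableAt_Rc (c : ℝ) {y : ℂ} (h0 : y ≠ 0) (h1 : y ≠ 1) :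
    DifferentiableAt ℂ (Rc c) y := by
  have heq : Rc c =ᶠ[𝓝 y] fun y => 1 / 2 * (y ^ ⌈c⌉ + y ^ (⌊c⌋ + 1)) * (y - 1)⁻¹ :=
    (eventually_ne_nhds h0).mono fun y hy => Rc_eq c hy
  have hpow : ∀ j : ℤ, DifferentiableAt ℂ (fun y : ℂ => y ^ j) y := fun j =>
    differentiableAt_zpow.2 (Or.inl h0)
  have hsub : y - 1 ≠ 0 := sub_ne_zero.2 h1
  have := hpow ⌈c⌉
  have := hpow (⌊c⌋ + 1)
  exact heq.differentiableAt_iff.2 (by fun_prop (disch := assumption))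

lemma ee_sub_one_ne_zero_of_im_ne_zero {z : ℂ} (hz : z.im ≠ 0) : ee z - 1 ≠ 0 := by
  rw [sub_ne_zero]
  intro h
  obtain ⟨j, rfl⟩ := ee_eq_one_iff.1 h
  simp at hz

lemma lineCoeff_inv_ee_sub_one_of_im_pos (hw : 0 < w.im) (hn : n ≤ 0) :
    lineCoeff (fun z => (ee z - 1)⁻¹) n w = if n = 0 then -1 else 0 := by
  obtain ⟨j, rfl⟩ := Int.exists_eq_neg_ofNat hn
  have hG : DifferentiableOn ℂ (fun u : ℂ => u ^ j * (u - 1)⁻¹) (Metric.ball 0 1) := by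
    intro u hu
    have hu1 : u - 1 ≠ 0 := by
      rw [sub_ne_zero]
      rintro rfl
      simp at hu
    have : DifferentiableAt ℂ (fun u : ℂ => u ^ j * (u - 1)⁻¹) u := by
      fun_prop (disch := assumption)
    exact this.differentiableWithinAt
  have h := lineCoeff_zero_comp_ee hG hw
  simp only [← zpow_natCast, ← ee_intCast_mul, lineCoeff_ee_mul, zero_sub] at h
  rw [h]
  rcases eq_or_ne j 0 with rfl | hj
  · simp
  · simp [hj]

lemma lineCoeff_inv_ee_sub_one_of_im_neg (hw : w.im < 0) (hn : -1 ≤ n) :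
    lineCoeff (fun z => (ee z - 1)⁻¹) n w = if n = -1 then 1 else 0 := by
  let g : ℂ → ℂ := fun z => ee ((1 : ℤ) * z) * (ee z - 1)⁻¹
  have hg : Function.Periodic g 1 := fun z => by
    simp only [g, ee_intCast_mul_add_one, ee_add_one]
  have hreflect : ∀ z : ℂ, z.im ≠ 0 → (ee z - 1)⁻¹ = -1 * g (-z) := by
    intro z hz
    have h1 := ee_sub_one_ne_zero_of_im_ne_zero hz
    have h2 : (ee z)⁻¹ - 1 ≠ 0 := by
      rw [← ee_neg]
      exact ee_sub_one_ne_zero_of_im_ne_zero (by simpa using hz)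
    simp only [g, Int.cast_one, one_mul, ee_neg]
    rw [inv_eq_one_div, ← div_eq_mul_inv, ← mul_div_assoc, div_eq_div_iff h1 h2]
    linear_combination inv_mul_cancel₀ (ee_ne_zero z)
  rw [lineCoeff_congr (g := fun z => -1 * g (-z)) fun x => hreflect _ (by simpa using hw.ne),
    lineCoeff_const_mul, lineCoeff_comp_neg hg, lineCoeff_ee_mul,
    lineCoeff_inv_ee_sub_one_of_im_pos (by simpa using hw) (by lia)]
  split_ifs <;> first | lia | simp

lemma lineCoeff_Rc (c : ℝ) (n : ℤ) (hw : w.im ≠ 0) :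
    lineCoeff (fun z => Rc c (ee z)) n w =
      1 / 2 * (lineCoeff (fun z => (ee z - 1)⁻¹) (n - ⌈c⌉) w +
        lineCoeff (fun z => (ee z - 1)⁻¹) (n - (⌊c⌋ + 1)) w) := by
  have hcont : Continuous fun x : ℝ => (ee (x + w) - 1)⁻¹ :=
    Continuous.inv₀ (by fun_prop) fun x => ee_sub_one_ne_zero_of_im_ne_zero (by simpa using hw)
  rw [← lineCoeff_ee_mul, ← lineCoeff_ee_mul, ← lineCoeff_add (by fun_prop) (by fun_prop),
    ← lineCoeff_const_mul]
  refine lineCoeff_congr fun x => ?_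
  rw [Rc_eq c (ee_ne_zero _), ee_intCast_mul, ee_intCast_mul]
  ring

lemma lineCoeff_Rc_of_lt (c : ℝ) (hn : n < c) (hw : 0 < w.im) :
    lineCoeff (fun z => Rc c (ee z)) n w = 0 := by
  have h1 : n < ⌈c⌉ := Int.lt_ceil.2 hn
  have h2 : n ≤ ⌊c⌋ := Int.le_floor.2 hn.le
  rw [lineCoeff_Rc c n hw.ne', lineCoeff_inv_ee_sub_one_of_im_pos hw (by lia),
    lineCoeff_inv_ee_sub_one_of_im_pos hw (by lia), if_neg (by lia), if_neg (by lia)]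
  simp

lemma lineCoeff_Rc_of_gt (c : ℝ) (hn : c < n) (hw : w.im < 0) :
    lineCoeff (fun z => Rc c (ee z)) n w = 0 := by
  have h1 : ⌈c⌉ ≤ n := Int.ceil_le.2 hn.le
  have h2 : ⌊c⌋ < n := Int.floor_lt.2 hn
  rw [lineCoeff_Rc c n hw.ne, lineCoeff_inv_ee_sub_one_of_im_neg hw (by lia),
    lineCoeff_inv_ee_sub_one_of_im_neg hw (by lia), if_neg (by lia), if_neg (by lia)]
  simp

lemma lineCoeff_Rc_intCast_of_im_pos (n : ℤ) (hw : 0 < w.im) :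
    lineCoeff (fun z => Rc n (ee z)) n w = -1 / 2 := by
  rw [lineCoeff_Rc _ n hw.ne', Int.ceil_intCast, Int.floor_intCast,
    lineCoeff_inv_ee_sub_one_of_im_pos hw (by lia),
    lineCoeff_inv_ee_sub_one_of_im_pos hw (by lia)]
  norm_num

lemma lineCoeff_Rc_intCast_of_im_neg (n : ℤ) (hw : w.im < 0) :
    lineCoeff (fun z => Rc n (ee z)) n w = 1 / 2 := by
  rw [lineCoeff_Rc _ n hw.ne, Int.ceil_intCast, Int.floor_intCast,
    lineCoeff_inv_ee_sub_one_of_im_neg hw (by lia),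
    lineCoeff_inv_ee_sub_one_of_im_neg hw (by lia)]
  norm_num

lemma lineCoeff_Rc_above_add_below {c κ ε : ℝ} (hκ : 0 < κ) (hw : w.im = (c - n) * κ)
    (hε : 0 < ε) (hlt : w.im ≠ 0 → ε < |w.im|) :
    lineCoeff (fun z => Rc c (ee z)) n (w + ε * I) +
      lineCoeff (fun z => Rc c (ee z)) n (w - ε * I) = 0 := by
  have habove : (w + ε * I).im = w.im + ε := by simp
  have hbelow : (w - ε * I).im = w.im - ε := by simp
  rcases lt_trichotomy (n : ℝ) c with h | rfl | h
  · have hpos : 0 < w.im := hw ▸ mul_pos (sub_pos.2 h) hκ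
    have := abs_of_pos hpos ▸ hlt hpos.ne'
    rw [lineCoeff_Rc_of_lt c h (by linarith), lineCoeff_Rc_of_lt c h (by linarith), add_zero]
  · rw [sub_self, zero_mul] at hw
    rw [lineCoeff_Rc_intCast_of_im_pos n (by linarith),
      lineCoeff_Rc_intCast_of_im_neg n (by linarith)]
    norm_num
  · have hneg : w.im < 0 := hw ▸ mul_neg_of_neg_of_pos (sub_neg.2 h) hκ
    have := abs_of_neg hneg ▸ hlt hneg.ne
    rw [lineCoeff_Rc_of_gt c h (by linarith), lineCoeff_Rc_of_gt c h (by linarith), add_zero]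

end RationalFunction

section Averaging

/-- The filter of neighbourhoods of the two ends `±i∞` of the cylinder `ℂ / ℤ`. -/
def imInfty : Filter ℂ := comap (fun z : ℂ => |z.im|) atTop

/-- `f` is bounded by a power of `e^{|Im z|}` near `±i∞`; for `f = F ∘ ee` this says that `F` has
at most a pole at `0` and at `∞`. -/
def HasExpGrowth (f : ℂ → ℂ) : Prop :=
  ∃ N : ℝ, f =O[imInfty] fun z => Real.exp (N * |z.im|)

/-- The term of index `lam` in the series `Av m F τ z`. -/
def avTerm (m : ℕ) (F : ℂ → ℂ) (τ : ℂ) (lam : ℤ) (z : ℂ) : ℂ :=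
  ee (m * lam ^ 2 * τ + 2 * m * lam * z) * F (ee (lam * τ + z))

variable {m : ℕ} {F : ℂ → ℂ} {τ : ℂ}

lemma Av_eq_tsum_avTerm (m : ℕ) (F : ℂ → ℂ) (τ z : ℂ) :
    Av m F τ z = ∑' lam, avTerm m F τ lam z := rfl

lemma im_intCast_mul_add (lam : ℤ) (τ z : ℂ) : (lam * τ + z).im = lam * τ.im + z.im := by simp

lemma tendsto_intCast_mul_add_imInfty (hτ : 0 < τ.im) (B : ℝ) :
    Tendsto (fun p : ℤ × ℂ => p.1 * τ + p.2) (cofinite ×ˢ 𝓟 {z | |z.im| ≤ B}) imInfty := by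
  have habs : Tendsto (fun lam : ℤ => |(lam : ℝ)| * τ.im - B) cofinite atTop :=
    tendsto_atTop_add_const_right _ _ <|
      (tendsto_norm_cocompact_atTop.comp Int.tendsto_coe_cofinite).atTop_mul_const hτ
  refine tendsto_comap_iff.2 (tendsto_atTop_mono' _ ?_ (habs.comp tendsto_fst))
  refine eventually_prod_principal_iff.2 (Eventually.of_forall fun lam z hz => ?_)
  have h := abs_sub_abs_le_abs_sub (lam * τ.im) (-z.im)
  rw [abs_mul, abs_of_pos hτ, abs_neg, sub_neg_eq_add] at h
  simp only [Function.comp_apply, im_intCast_mul_add]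
  exact (sub_le_sub_left hz _).trans h

lemma norm_avTerm_le (m : ℕ) {C N B : ℝ} {lam : ℤ} {z : ℂ} (hτ : 0 < τ.im) (hz : |z.im| ≤ B)
    (hC : 0 < C) (hF : ‖F (ee (lam * τ + z))‖ ≤ C * Real.exp (N * |(lam * τ + z).im|)) :
    ‖avTerm m F τ lam z‖ ≤ C * Real.exp (|N| * B) * (|(lam : ℝ)| ^ 0 * Real.exp (-Real.pi *
      (2 * m * τ.im * lam ^ 2 - 2 * (2 * m * B + |N| * τ.im / (2 * Real.pi)) * |(lam : ℝ)|))) := by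
  have hexp : (m * lam ^ 2 * τ + 2 * m * lam * z : ℂ).im
      = m * lam ^ 2 * τ.im + 2 * m * (lam * z.im) := by
    have h : (m * lam ^ 2 * τ + 2 * m * lam * z : ℂ)
        = ((m * lam ^ 2 : ℝ) : ℂ) * τ + ((2 * m * lam : ℝ) : ℂ) * z := by push_cast; ring
    rw [h, add_im, im_ofReal_mul, im_ofReal_mul]
    ring
  have h1 : -(lam * z.im) ≤ |(lam : ℝ)| * B :=
    (neg_le_abs _).trans (by rw [abs_mul]; gcongr)
  have h2 : N * |(lam * τ + z).im| ≤ |N| * (|(lam : ℝ)| * τ.im + B) := by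
    rw [im_intCast_mul_add]
    refine mul_le_mul (le_abs_self N) ((abs_add_le _ _).trans ?_) (abs_nonneg _) (abs_nonneg _)
    rw [abs_mul, abs_of_pos hτ]
    gcongr
  rw [avTerm, norm_mul, norm_ee, hexp]
  refine (mul_le_mul_of_nonneg_left hF (Real.exp_pos _).le).trans ?_
  rw [pow_zero, one_mul, mul_left_comm, ← Real.exp_add, mul_assoc C, ← Real.exp_add]
  refine mul_le_mul_of_nonneg_left (Real.exp_le_exp.2 ?_) hC.le
  have h3 := mul_le_mul_of_nonneg_left h1 (show 0 ≤ 4 * Real.pi * m by positivity)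
  have h4 : Real.pi * (2 * (|N| * τ.im / (2 * Real.pi)) * |(lam : ℝ)|)
      = |N| * τ.im * |(lam : ℝ)| := by
    field_simp
  linarith

lemma exists_summable_norm_avTerm_le (hm : 0 < m) (hτ : 0 < τ.im)
    (hF : HasExpGrowth fun z => F (ee z)) (B : ℝ) :
    ∃ u : ℤ → ℝ, Summable u ∧
      ∀ᶠ lam in cofinite, ∀ z : ℂ, |z.im| ≤ B → ‖avTerm m F τ lam z‖ ≤ u lam := by
  obtain ⟨N, hN⟩ := hF
  obtain ⟨C, hC, hbound⟩ := hN.exists_pos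
  refine ⟨_, (summable_pow_mul_jacobiTheta₂_term_bound (2 * m * B + |N| * τ.im / (2 * Real.pi))
    (T := 2 * m * τ.im) (by positivity) 0).mul_left (C * Real.exp (|N| * B)), ?_⟩
  have hev := (tendsto_intCast_mul_add_imInfty hτ B).eventually hbound.bound
  filter_upwards [eventually_prod_principal_iff.1 hev] with lam hlam z hz
  have h := hlam z hz
  rw [Real.norm_of_nonneg (Real.exp_pos _).le] at h
  exact mod_cast norm_avTerm_le m hτ hz hC h

lemma summable_avTerm (hm : 0 < m) (hτ : 0 < τ.im) (hF : HasExpGrowth fun z => F (ee z)) (z : ℂ) :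
    Summable fun lam => avTerm m F τ lam z := by
  obtain ⟨u, hu, hbound⟩ := exists_summable_norm_avTerm_le hm hτ hF |z.im|
  exact .of_norm_bounded_eventually hu (hbound.mono fun lam hlam => hlam z le_rfl)

lemma differentiableOn_tsum_avTerm (hm : 0 < m) (hτ : 0 < τ.im)
    (hF : HasExpGrowth fun z => F (ee z)) {J : Set ℤ} {V : Set ℂ} (hV : IsOpen V)
    (hd : ∀ lam ∈ J, DifferentiableOn ℂ (fun z => F (ee (lam * τ + z))) V) :
    DifferentiableOn ℂ (fun z => ∑' lam : J, avTerm m F τ lam z) V := by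
  intro z₀ hz₀
  let U : Set ℂ := {z | |z.im| < |z₀.im| + 1} ∩ V
  have hU : IsOpen U := (isOpen_lt (by fun_prop) continuous_const).inter hV
  obtain ⟨u, hu, hbound⟩ := exists_summable_norm_avTerm_le hm hτ hF (|z₀.im| + 1)
  have hunif := tendstoUniformlyOn_tsum_of_cofinite_eventually
    (f := fun (lam : J) z => avTerm m F τ lam z) (s := U) (hu.subtype J)
    ((Subtype.val_injective.tendsto_cofinite.eventually hbound).mono
      fun lam hlam z hz => hlam z hz.1.le)
  refine (hunif.tendstoLocallyUniformlyOn.differentiableOn (Eventually.of_forall fun t => ?_)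
    hU).differentiableAt (hU.mem_nhds ⟨by simp, hz₀⟩) |>.differentiableWithinAt
  refine DifferentiableOn.fun_sum fun lam _ => ?_
  exact (Differentiable.differentiableOn (by fun_prop)).mul
    ((hd lam lam.2).mono Set.inter_subset_right)

lemma differentiableOn_Av (hm : 0 < m) (hτ : 0 < τ.im) (hF : HasExpGrowth fun z => F (ee z))
    {V : Set ℂ} (hV : IsOpen V)
    (hd : ∀ lam : ℤ, DifferentiableOn ℂ (fun z => F (ee (lam * τ + z))) V) :
    DifferentiableOn ℂ (Av m F τ) V := by
  have h := differentiableOn_tsum_avTerm hm hτ hF (J := Set.univ) hV fun lam _ => hd lam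
  exact h.congr fun z _ => (tsum_univ fun lam => avTerm m F τ lam z).symm

lemma Av_periodic (m : ℕ) (F : ℂ → ℂ) (τ : ℂ) : Function.Periodic (Av m F τ) 1 := by
  intro z
  refine tsum_congr fun lam => ?_
  have h : (m * lam ^ 2 * τ + 2 * m * lam * (z + 1) : ℂ)
      = m * lam ^ 2 * τ + 2 * m * lam * z + (2 * m * lam : ℤ) := by push_cast; ring
  rw [← add_assoc, ee_add_one, h, ee_add_intCast]

lemma lineCoeff_avTerm (m : ℕ) (F : ℂ → ℂ) (τ : ℂ) (lam l : ℤ) (w : ℂ) :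
    lineCoeff (avTerm m F τ lam) l w = ee (m * lam ^ 2 * τ + (l - 2 * m * lam) * (lam * τ)) *
      lineCoeff (fun z => F (ee z)) (l - 2 * m * lam) (lam * τ + w) := by
  have hterm : avTerm m F τ lam = fun z => ee (m * lam ^ 2 * τ) *
      (ee ((2 * m * lam : ℤ) * z) * F (ee (lam * τ + z))) := by
    funext z
    rw [avTerm, ee_add, mul_assoc]
    push_cast
    rfl
  rw [hterm, lineCoeff_const_mul, lineCoeff_ee_mul,
    lineCoeff_comp_add_left (fun z => F (ee z)), ee_add]
  push_cast
  ring

lemma hasSum_lineCoeff_avTerm (hm : 0 < m) (hτ : 0 < τ.im) (hF : HasExpGrowth fun z => F (ee z))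
    {w : ℂ} (hcont : ∀ lam, Continuous fun x : ℝ => avTerm m F τ lam (x + w)) (l : ℤ) :
    HasSum (fun lam => lineCoeff (avTerm m F τ lam) l w) (lineCoeff (Av m F τ) l w) := by
  obtain ⟨u, hu, hbound⟩ := exists_summable_norm_avTerm_le hm hτ hF |w.im|
  let f : ℤ → ℝ → ℂ := fun lam x => avTerm m F τ lam (x + w) * ee (-l * (x + w))
  have hee : ∀ x : ℝ, ‖ee (-l * (x + w))‖ = Real.exp (2 * Real.pi * l * w.im) := by
    intro x
    rw [norm_ee]
    congr 1
    simp only [neg_mul, neg_im, mul_im, intCast_re, add_im, ofReal_im, zero_add, intCast_im, add_re,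
      ofReal_re, zero_mul, add_zero, mul_neg, neg_neg]
    ring
  have hf : ∀ᶠ lam in cofinite, ∀ x ∈ Set.uIcc (0 : ℝ) 1,
      ‖f lam x‖ ≤ u lam * Real.exp (2 * Real.pi * l * w.im) := by
    filter_upwards [hbound] with lam hlam x _
    rw [norm_mul, hee]
    gcongr
    exact hlam _ (by simp)
  have hunif := tendstoUniformlyOn_tsum_of_cofinite_eventually (hu.mul_right _) hf
  have hlim := hunif.tendsto_intervalIntegral_of_continuousOn (μ := volume)
    (.of_forall fun t => (continuous_finsetSum t fun lam _ =>
      (hcont lam).mul (by fun_prop)).continuousOn)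
  have hsum : ∀ t : Finset ℤ, ∑ lam ∈ t, lineCoeff (avTerm m F τ lam) l w =
      ∫ x in (0 : ℝ)..1, ∑ lam ∈ t, f lam x := by
    intro t
    rw [← lineCoeff_finsetSum fun lam _ => hcont lam]
    simp only [lineCoeff, f, Finset.sum_mul]
  simp only [f, tsum_mul_right] at hlim
  exact hlim.congr fun t => (hsum t).symm

lemma Av_zpow_mul_comp_div (m : ℕ) (F : ℂ → ℂ) (τ : ℂ) (μ : ℤ) (z : ℂ) :
    Av m (fun y => y ^ (-(2 * m * μ)) * F (y / ee (μ * τ))) τ z =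
      ee (-(m * μ ^ 2 * τ)) * Av m F τ z := by
  rw [Av_eq_tsum_avTerm, Av_eq_tsum_avTerm, ← tsum_mul_left,
    ← (Equiv.addRight μ).tsum_eq fun lam => avTerm m _ τ lam z]
  refine tsum_congr fun lam => ?_
  have hshift : ((lam + μ : ℤ) * τ + z : ℂ) - μ * τ = lam * τ + z := by push_cast; ring
  rw [Equiv.coe_addRight, avTerm, avTerm, ← ee_sub, hshift, ← mul_assoc, ← mul_assoc,
    ← ee_intCast_mul, ← ee_add, ← ee_add]
  congr 2
  push_cast
  ring

end Averaging

section Lattice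

/-- The lattice `ℤτ + ℤ` of periods, as a `PeriodPair`. -/
def unitPeriodPair {τ : ℂ} (hτ : 0 < τ.im) : PeriodPair where
  ω₁ := τ
  ω₂ := 1
  indep := by
    refine LinearIndependent.pair_iff.2 fun a b hab => ?_
    have ha : a = 0 := by simpa [hτ.ne'] using congrArg im hab
    exact ⟨ha, by simpa [ha] using congrArg re hab⟩

variable {τ : ℂ}

lemma mem_lattice_unitPeriodPair (hτ : 0 < τ.im) {z : ℂ} :
    z ∈ (unitPeriodPair hτ).lattice ↔ ∃ a b : ℤ, z = a * τ + b := by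
  simp [PeriodPair.mem_lattice, unitPeriodPair, eq_comm]

lemma sub_mem_lattice_of_ee_div_ee_eq_one (hτ : 0 < τ.im) {z p : ℂ} (lam : ℤ)
    (h : ee (lam * τ + z) / ee p = 1) : z - p ∈ (unitPeriodPair hτ).lattice := by
  rw [← ee_sub, ee_eq_one_iff] at h
  obtain ⟨n, hn⟩ := h
  refine (mem_lattice_unitPeriodPair hτ).2 ⟨-lam, n, ?_⟩
  push_cast
  linear_combination hn

lemma eventually_forall_lt_abs_im (hτ : 0 < τ.im) (w : ℂ) :
    ∀ᶠ ε : ℝ in 𝓝[>] 0, ∀ lam : ℤ, (lam * τ + w).im ≠ 0 → ε < |(lam * τ + w).im| := by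
  have hfar : ∀ᶠ lam : ℤ in cofinite, 1 ≤ |(lam * τ + w).im| := by
    have h := (tendsto_comap.comp
      (tendsto_intCast_mul_add_imInfty hτ |w.im|)).eventually (eventually_ge_atTop 1)
    exact (eventually_prod_principal_iff.1 h).mono fun lam hlam => hlam w (by simp)
  have hnear := (eventually_all_finite hfar).2 fun lam _ =>
    show ∀ᶠ ε : ℝ in 𝓝[>] 0, (lam * τ + w).im ≠ 0 → ε < |(lam * τ + w).im| from
      eventually_imp_distrib_left.2 fun h =>
        nhdsWithin_le_nhds (eventually_lt_nhds (abs_pos.2 h))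
  have hone : ∀ᶠ ε : ℝ in 𝓝[>] 0, ε < 1 := nhdsWithin_le_nhds (eventually_lt_nhds one_pos)
  filter_upwards [hnear, hone] with ε hε hε1 lam hlam
  by_cases h : 1 ≤ |(lam * τ + w).im|
  · exact hε1.trans_le h
  · exact hε lam h hlam

lemma eventually_nearLine_sub_notMem_lattice (hτ : 0 < τ.im) (w p : ℂ) :
    ∀ᶠ z in nearLine w, z - p ∉ (unitPeriodPair hτ).lattice := by
  refine eventually_nearLine_iff.2 ?_
  filter_upwards [eventually_forall_lt_abs_im hτ (w - p), self_mem_nhdsWithin] with ε hε hpos x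
  have key : ∀ δ : ℝ, |δ| = ε → x + (w + δ * I) - p ∉ (unitPeriodPair hτ).lattice := by
    intro δ hδ h
    obtain ⟨a, b, hab⟩ := (mem_lattice_unitPeriodPair hτ).1 h
    have him : ((-a : ℤ) * τ + (w - p)).im = -δ := by
      have := congrArg im hab
      simp only [sub_im, add_im, ofReal_im, mul_im, ofReal_re, I_im, mul_one, I_re, mul_zero,
        add_zero, zero_add, intCast_re, intCast_im, zero_mul, Int.cast_neg, neg_mul,
        neg_im] at this ⊢
      linarith
    have hne : δ ≠ 0 := abs_pos.1 (hδ ▸ hpos)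
    have := hε (-a) (by rwa [him, neg_ne_zero])
    rw [him, abs_neg, hδ] at this
    exact this.false
  refine ⟨key ε (abs_of_pos hpos), ?_⟩
  simpa [sub_eq_add_neg] using key (-ε) (by rw [abs_neg, abs_of_pos hpos])

end Lattice

section AppellLerch

/-- The rational function `y ↦ R_c(y / e(p))`, whose average over `ℤτ` is the Appell–Lerch sum
with poles at `p + ℤτ + ℤ`. -/
def appellKernel (c : ℝ) (p : ℂ) (y : ℂ) : ℂ := Rc c (y / ee p)

variable {m : ℕ} {τ : ℂ}

lemma appellKernel_ee (c : ℝ) (p z : ℂ) : appellKernel c p (ee z) = Rc c (ee (-p + z)) := by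
  rw [appellKernel, ← ee_sub, sub_eq_neg_add]

lemma differentiableAt_appellKernel (c : ℝ) {p y : ℂ} (h0 : y ≠ 0) (h1 : y / ee p ≠ 1) :
    DifferentiableAt ℂ (appellKernel c p) y :=
  (differentiableAt_Rc c (div_ne_zero h0 (ee_ne_zero p)) h1).comp (f := fun y => y / ee p) y
    (by fun_prop)

lemma norm_inv_sub_one_le {y : ℂ} (hy : 2 * ‖y‖ ≤ 1 ∨ 2 ≤ ‖y‖) : ‖(y - 1)⁻¹‖ ≤ 2 := by
  have h : (1 / 2 : ℝ) ≤ ‖y - 1‖ := by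
    rcases hy with hy | hy
    · have := norm_sub_norm_le 1 y
      rw [norm_one, norm_sub_rev] at this
      linarith
    · have := norm_sub_norm_le y 1
      rw [norm_one] at this
      linarith
  rw [norm_inv]
  exact inv_le_of_inv_le₀ two_pos (by rwa [← one_div])

lemma norm_ee_le_half_or_two_le {z : ℂ} (hz : 1 ≤ |z.im|) : 2 * ‖ee z‖ ≤ 1 ∨ 2 ≤ ‖ee z‖ := by
  have key : ∀ t : ℝ, 1 ≤ t → 2 ≤ Real.exp (2 * Real.pi * t) := fun t ht => by
    have := Real.add_one_le_exp (2 * Real.pi * t)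
    nlinarith [Real.pi_gt_three]
  rw [norm_ee]
  rcases le_abs'.1 hz with h | h
  · exact Or.inr (by simpa using key (-z.im) (by linarith))
  · refine Or.inl ?_
    have := key z.im h
    rw [Real.exp_neg, ← div_eq_mul_inv]
    exact (div_le_one (Real.exp_pos _)).2 this

lemma norm_ee_zpow_le {k : ℤ} {N : ℝ} (hk : |(k : ℝ)| ≤ N) (z : ℂ) :
    ‖ee z ^ k‖ ≤ Real.exp (2 * Real.pi * N * |z.im|) := by
  rw [← ee_intCast_mul, norm_ee]
  refine Real.exp_le_exp.2 ((neg_le_abs _).trans ?_)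
  have him : |(k * z).im| = |(k : ℝ)| * |z.im| := by rw [← abs_mul]; simp
  rw [abs_mul, him, abs_of_pos Real.two_pi_pos, ← mul_assoc]
  gcongr

lemma abs_ceil_le (c : ℝ) : |(⌈c⌉ : ℝ)| ≤ |c| + 1 :=
  abs_le.2 ⟨by linarith [Int.le_ceil c, neg_abs_le c],
    by linarith [Int.ceil_lt_add_one c, le_abs_self c]⟩

lemma abs_floor_add_one_le (c : ℝ) : |((⌊c⌋ + 1 : ℤ) : ℝ)| ≤ |c| + 1 := by
  rw [Int.cast_add, Int.cast_one]
  exact abs_le.2 ⟨by linarith [Int.lt_floor_add_one c, neg_abs_le c],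
    by linarith [Int.floor_le c, le_abs_self c]⟩

lemma hasExpGrowth_Rc_ee (c : ℝ) : HasExpGrowth fun z => Rc c (ee z) := by
  refine ⟨2 * Real.pi * (|c| + 1), .of_bound 2 ?_⟩
  filter_upwards [tendsto_comap.eventually (eventually_ge_atTop 1)] with z hz
  rw [Rc_eq c (ee_ne_zero z), norm_mul, norm_mul, Real.norm_of_nonneg (Real.exp_pos _).le]
  have hinv := norm_inv_sub_one_le (norm_ee_le_half_or_two_le hz)
  have hpow := (norm_add_le (ee z ^ ⌈c⌉) (ee z ^ (⌊c⌋ + 1))).trans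
    (add_le_add (norm_ee_zpow_le (abs_ceil_le c) z) (norm_ee_zpow_le (abs_floor_add_one_le c) z))
  calc ‖(1 / 2 : ℂ)‖ * ‖ee z ^ ⌈c⌉ + ee z ^ (⌊c⌋ + 1)‖ * ‖(ee z - 1)⁻¹‖
      ≤ 1 / 2 * (Real.exp (2 * Real.pi * (|c| + 1) * |z.im|) +
          Real.exp (2 * Real.pi * (|c| + 1) * |z.im|)) * 2 := by
        gcongr
        norm_num
    _ = 2 * Real.exp (2 * Real.pi * (|c| + 1) * |z.im|) := by ring

lemma HasExpGrowth.comp_add_left {f : ℂ → ℂ} (hf : HasExpGrowth f) (a : ℂ) :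
    HasExpGrowth fun z => f (a + z) := by
  obtain ⟨N, hN⟩ := hf
  have hshift : Tendsto (fun z => a + z) imInfty imInfty := by
    refine tendsto_comap_iff.2 (tendsto_atTop_mono (fun z => ?_)
      (tendsto_atTop_add_const_right _ (-|a.im|) tendsto_comap))
    have := abs_sub_abs_le_abs_sub z.im (-a.im)
    rwa [abs_neg, sub_neg_eq_add, add_comm z.im, ← add_im] at this
  refine ⟨|N|, (hN.comp_tendsto hshift).trans
    (.of_bound (Real.exp (|N| * |a.im|)) (.of_forall fun z => ?_))⟩
  simp only [Function.comp_apply, Real.norm_eq_abs, Real.abs_exp, ← Real.exp_add, ← mul_add]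
  gcongr
  · exact le_abs_self N
  · rw [add_im]
    exact abs_add_le _ _

lemma hasExpGrowth_appellKernel_ee (c : ℝ) (p : ℂ) :
    HasExpGrowth fun z => appellKernel c p (ee z) := by
  simpa only [appellKernel_ee] using (hasExpGrowth_Rc_ee c).comp_add_left (-p)

lemma differentiableAt_appellKernel_ee (c : ℝ) {p τ z : ℂ} (lam : ℤ)
    (h : ee (lam * τ + z) / ee p ≠ 1) :
    DifferentiableAt ℂ (fun z => appellKernel c p (ee (lam * τ + z))) z :=
  (differentiableAt_appellKernel c (ee_ne_zero _) h).comp (f := fun z => ee (lam * τ + z)) z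
    (by fun_prop)

lemma differentiableOn_Av_appellKernel (hm : 0 < m) (hτ : 0 < τ.im) (c : ℝ) (p : ℂ) :
    DifferentiableOn ℂ (Av m (appellKernel c p) τ)
      {z | z - p ∉ (unitPeriodPair hτ).lattice} := by
  refine differentiableOn_Av hm hτ (hasExpGrowth_appellKernel_ee c p)
    ((unitPeriodPair hτ).isClosed_lattice.isOpen_compl.preimage (by fun_prop)) fun lam z hz => ?_
  exact (differentiableAt_appellKernel_ee c lam fun h =>
    hz (sub_mem_lattice_of_ee_div_ee_eq_one hτ lam h)).differentiableWithinAt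

lemma ee_div_ee_ne_one_of_abs_im_lt {p z : ℂ} {lam : ℤ} (hlam : lam ≠ 0)
    (hz : |(z - p).im| < τ.im) : ee (lam * τ + z) / ee p ≠ 1 := by
  rw [← ee_sub, Ne, ee_eq_one_iff]
  rintro ⟨n, hn⟩
  have him : (z - p).im = -(lam * τ.im) := by
    have := congrArg im hn
    simp only [sub_im, add_im, mul_im, intCast_re, intCast_im, zero_mul, add_zero] at this ⊢
    linarith
  have hone : (1 : ℝ) ≤ |(lam : ℝ)| := mod_cast Int.one_le_abs hlam
  have hτ : 0 < τ.im := (abs_nonneg _).trans_lt hz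
  rw [him, abs_neg, abs_mul, abs_of_pos hτ] at hz
  nlinarith

lemma tendsto_sub_mul_inv_ee_sub_one (p : ℂ) :
    Tendsto (fun z => (z - p) * (ee (-p + z) - 1)⁻¹) (𝓝[≠] p) (𝓝 (2 * Real.pi * I)⁻¹) := by
  have hd : HasDerivAt (fun z => ee (-p + z)) (2 * Real.pi * I) p := by
    simpa using (hasDerivAt_ee (-p + p)).comp_const_add (-p) p
  refine (hd.tendsto_slope.inv₀ two_pi_I_ne_zero).congr fun z => ?_
  rw [slope_def_field, neg_add_cancel, ee_zero, inv_div, div_eq_mul_inv]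

lemma tendsto_sub_mul_appellKernel_ee (c : ℝ) (p : ℂ) :
    Tendsto (fun z => (z - p) * appellKernel c p (ee z)) (𝓝[≠] p) (𝓝 (2 * Real.pi * I)⁻¹) := by
  have hcont : Continuous fun z =>
      1 / 2 * (ee (⌈c⌉ * (-p + z)) + ee ((⌊c⌋ + 1 : ℤ) * (-p + z))) := by
    fun_prop
  have hone : Tendsto (fun z => 1 / 2 * (ee (⌈c⌉ * (-p + z)) + ee ((⌊c⌋ + 1 : ℤ) * (-p + z))))
      (𝓝[≠] p) (𝓝 1) := by
    convert hcont.continuousWithinAt.tendsto using 2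
    simp only [neg_add_cancel, mul_zero, ee_zero]
    norm_num
  have h := hone.mul (tendsto_sub_mul_inv_ee_sub_one p)
  rw [one_mul] at h
  refine h.congr fun z => ?_
  rw [appellKernel_ee, Rc_eq c (ee_ne_zero _), ee_intCast_mul, ee_intCast_mul]
  ring

lemma tendsto_sub_mul_Av_appellKernel (hm : 0 < m) (hτ : 0 < τ.im) (c : ℝ) (p : ℂ) :
    Tendsto (fun z => (z - p) * Av m (appellKernel c p) τ z) (𝓝[≠] p)
      (𝓝 (2 * Real.pi * I)⁻¹) := by
  let J : Set ℤ := (({0} : Finset ℤ) : Set ℤ)ᶜ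
  let V : Set ℂ := {z | |(z - p).im| < τ.im}
  have hV : IsOpen V := isOpen_lt (by fun_prop) continuous_const
  have hd : DifferentiableOn ℂ
      (fun z => ∑' lam : J, avTerm m (appellKernel c p) τ lam z) V := by
    refine differentiableOn_tsum_avTerm hm hτ (hasExpGrowth_appellKernel_ee c p) hV
      fun lam hlam z hz => ?_
    exact (differentiableAt_appellKernel_ee c lam
      (ee_div_ee_ne_one_of_abs_im_lt (by simpa [J] using hlam) hz)).differentiableWithinAt
  have hrest : Tendsto (fun z => (z - p) *
      ∑' lam : J, avTerm m (appellKernel c p) τ lam z) (𝓝[≠] p) (𝓝 0) := by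
    have hsub : Continuous fun z => z - p := by fun_prop
    have hp : p ∈ V := by simpa [V]
    have := (hsub.tendsto p).mul (hd.differentiableAt (hV.mem_nhds hp)).continuousAt.tendsto
    rw [sub_self, zero_mul] at this
    exact this.mono_left nhdsWithin_le_nhds
  have h := (tendsto_sub_mul_appellKernel_ee c p).add hrest
  rw [add_zero] at h
  refine h.congr fun z => ?_
  rw [Av_eq_tsum_avTerm, ← (summable_avTerm hm hτ
    (hasExpGrowth_appellKernel_ee c p) z).sum_add_tsum_compl (s := {0}), Finset.sum_singleton]
  simp only [avTerm]
  simp [mul_add, J]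

lemma Rc_sub_intCast (c : ℝ) (k : ℤ) {y : ℂ} (hy : y ≠ 0) :
    Rc (c - k) y = y ^ (-k) * Rc c y := by
  rw [Rc_eq _ hy, Rc_eq _ hy, Int.ceil_sub_intCast, Int.floor_sub_intCast,
    show ⌈c⌉ - k = -k + ⌈c⌉ by ring, show ⌊c⌋ - k + 1 = -k + (⌊c⌋ + 1) by ring,
    zpow_add₀ hy, zpow_add₀ hy]
  ring

lemma appellKernel_shift (m : ℕ) (c : ℝ) (p τ z : ℂ) (μ ν : ℤ) :
    appellKernel (c - (2 * m * μ : ℤ)) (p + μ * τ + ν) (ee z) =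
      ee (2 * m * μ * (p + μ * τ)) *
        (ee z ^ (-(2 * m * μ)) * appellKernel c p (ee z / ee (μ * τ))) := by
  have hz : -(p + μ * τ + ν) + z = -p + (z - μ * τ) + (-ν : ℤ) := by push_cast; ring
  rw [← ee_sub, appellKernel_ee, appellKernel_ee, hz, ee_add_intCast,
    Rc_sub_intCast _ _ (ee_ne_zero _), ← ee_intCast_mul, ← ee_intCast_mul, ← mul_assoc, ← ee_add]
  congr 2
  push_cast
  ring

lemma Av_appellKernel_shift (m : ℕ) (c : ℝ) (p τ z : ℂ) (μ ν : ℤ) :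
    Av m (appellKernel (c - (2 * m * μ : ℤ)) (p + μ * τ + ν)) τ z =
      ee (m * μ ^ 2 * τ + 2 * m * μ * p) * Av m (appellKernel c p) τ z := by
  have h : Av m (appellKernel (c - (2 * m * μ : ℤ)) (p + μ * τ + ν)) τ z =
      ee (2 * m * μ * (p + μ * τ)) *
        Av m (fun y => y ^ (-(2 * m * μ)) * appellKernel c p (y / ee (μ * τ))) τ z := by
    rw [Av, Av, ← tsum_mul_left]
    refine tsum_congr fun lam => ?_
    rw [appellKernel_shift, mul_left_comm]
  rw [h, Av_zpow_mul_comp_div, ← mul_assoc, ← ee_add]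
  congr 2
  ring

end AppellLerch

section AppellMean

variable {m : ℕ} {τ : ℂ}

lemma continuous_avTerm_appellKernel (m : ℕ) (hτ : 0 < τ.im) (c : ℝ) {p w : ℂ}
    (hw : ∀ x : ℝ, x + w - p ∉ (unitPeriodPair hτ).lattice) (lam : ℤ) :
    Continuous fun x : ℝ => avTerm m (appellKernel c p) τ lam (x + w) := by
  refine continuous_add_of_forall_continuousAt fun x => ContinuousAt.mul (by fun_prop) ?_
  exact (differentiableAt_appellKernel_ee c lam fun h =>
    hw x (sub_mem_lattice_of_ee_div_ee_eq_one hτ lam h)).continuousAt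

lemma lineCoeff_avTerm_appellKernel (m : ℕ) (c : ℝ) (p τ : ℂ) (lam l : ℤ) (w : ℂ) :
    lineCoeff (avTerm m (appellKernel c p) τ lam) l w =
      ee (m * lam ^ 2 * τ + (l - 2 * m * lam) * (lam * τ - p)) *
        lineCoeff (fun z => Rc c (ee z)) (l - 2 * m * lam) (lam * τ + (w - p)) := by
  simp only [lineCoeff_avTerm, appellKernel_ee]
  rw [lineCoeff_comp_add_left (fun z => Rc c (ee z)), ← mul_assoc, ← ee_add]
  congr 2
  · push_cast
    ring
  · ring

lemma im_intCast_mul_add_neg_sub (hm : 0 < m) {c : ℝ} {p : ℂ} (hc : c * τ.im = -(2 * m * p.im))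
    (lam l : ℤ) : (lam * τ + (-(l * τ / (2 * m)) - p)).im =
      (c - (l - 2 * m * lam : ℤ)) * (τ.im / (2 * m)) := by
  have him : (l * τ / (2 * m)).im = l / (2 * m) * τ.im := by
    have h : l * τ / (2 * m) = ((l / (2 * m) : ℝ) : ℂ) * τ := by push_cast; ring
    rw [h, im_ofReal_mul]
  rw [im_intCast_mul_add, sub_im, neg_im, him]
  push_cast
  field_simp
  linear_combination -hc

lemma isMeanFourierCoeff_Av_appellKernel (hm : 0 < m) (hτ : 0 < τ.im) {c : ℝ} {p : ℂ}
    (hc : c * τ.im = -(2 * m * p.im)) (l : ℤ) :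
    IsMeanFourierCoeff (Av m (appellKernel c p) τ) l (-(l * τ / (2 * m))) 0 := by
  let w : ℂ := -(l * τ / (2 * m))
  refine tendsto_nhds_of_eventually_eq ?_
  filter_upwards [eventually_forall_lt_abs_im hτ (w - p), self_mem_nhdsWithin,
    eventually_nearLine_iff.1 (eventually_nearLine_sub_notMem_lattice hτ w p)] with ε hε hpos hline
  have hsum := (hasSum_lineCoeff_avTerm hm hτ (hasExpGrowth_appellKernel_ee c p)
    (continuous_avTerm_appellKernel m hτ c fun x => (hline x).1) l).add
    (hasSum_lineCoeff_avTerm hm hτ (hasExpGrowth_appellKernel_ee c p)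
    (continuous_avTerm_appellKernel m hτ c fun x => (hline x).2) l)
  have hterm : ∀ lam : ℤ, lineCoeff (avTerm m (appellKernel c p) τ lam) l (w + ε * I) +
      lineCoeff (avTerm m (appellKernel c p) τ lam) l (w - ε * I) = 0 := by
    intro lam
    have h := lineCoeff_Rc_above_add_below (κ := τ.im / (2 * m)) (by positivity)
      (im_intCast_mul_add_neg_sub hm hc lam l) hpos (hε lam)
    rw [add_assoc, add_sub_assoc, sub_add_eq_add_sub, sub_right_comm] at h
    rw [lineCoeff_avTerm_appellKernel, lineCoeff_avTerm_appellKernel, ← mul_add, h, mul_zero]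
  simp only [hterm] at hsum
  rw [hsum.unique hasSum_zero, mul_zero]

end AppellMean

section CanonicalCoefficients

variable {m : ℕ} {τ : ℂ} {φ : ℂ → ℂ → ℂ} {h : ℤ → ℂ → ℂ}

lemma IsCanonCoeff.isMeanFourierCoeff (hh : IsCanonCoeff m φ h) (hτ : 0 < τ.im) (l : ℤ) :
    IsMeanFourierCoeff (φ τ) l (-(l * τ / (2 * m))) (ee (l ^ 2 / (4 * m) * τ) * h l τ) := by
  have hline : ∀ v : ℂ, lineCoeff (φ τ) l (-(l * τ / (2 * m)) + v) =
      ee (l * (l * τ / (2 * m))) * ∫ x in (0 : ℝ)..1,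
        φ τ (x + v - l * τ / (2 * m)) * ee (-l * (x + v)) := by
    intro v
    have hcomp := lineCoeff_comp_add_left (φ τ) l (-(l * τ / (2 * m))) v
    rw [mul_neg, ee_neg, eq_inv_mul_iff_mul_eq₀ (ee_ne_zero _)] at hcomp
    rw [← hcomp]
    simp only [lineCoeff, sub_eq_neg_add]
  have hlim := (hh l τ hτ).const_mul (ee (l * (l * τ / (2 * m))))
  have hexp : (l * (l * τ / (2 * m)) + -l ^ 2 * τ / (4 * m) : ℂ) = l ^ 2 / (4 * m) * τ := by
    ring
  rw [← mul_assoc, ← ee_add, hexp] at hlim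
  refine hlim.congr fun ε => ?_
  rw [sub_eq_add_neg, hline, hline, ← mul_add, mul_left_comm]
  simp only [sub_eq_add_neg]

lemma EllipticLaw.lineCoeff_add_two_mul (hφ : EllipticLaw m φ) (hτ : 0 < τ.im) (l : ℤ) (w : ℂ) :
    lineCoeff (φ τ) (l + 2 * m) (-τ + w) = ee ((l + m) * τ) * lineCoeff (φ τ) l w := by
  have hshift : (fun z => φ τ (-τ + z)) = fun z =>
      ee (-(m * τ)) * (ee ((2 * m : ℤ) * z) * φ τ z) := by
    funext z
    have h := hφ τ hτ z (-1) 0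
    have hz : -τ + z = z + ((-1 : ℤ) : ℂ) * τ + ((0 : ℤ) : ℂ) := by push_cast; ring
    rw [hz, h, ← mul_assoc, ← ee_add]
    congr 2
    push_cast
    ring
  have hcomp := lineCoeff_comp_add_left (φ τ) (l + 2 * m) (-τ) w
  rw [hshift, lineCoeff_const_mul, lineCoeff_ee_mul, add_sub_cancel_right, mul_neg, ee_neg, ee_neg,
    eq_inv_mul_iff_mul_eq₀ (ee_ne_zero _), ← mul_assoc, ← ee_neg, ← ee_add] at hcomp
  rw [← hcomp]
  congr 2
  push_cast
  ring

lemma EllipticLaw.canonCoeff_add_two_mul (hφ : EllipticLaw m φ) (hm : 0 < m)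
    (hh : IsCanonCoeff m φ h) (hτ : 0 < τ.im) (l : ℤ) : h (l + 2 * m) τ = h l τ := by
  have hm' : (m : ℂ) ≠ 0 := by exact_mod_cast hm.ne'
  have hline : (-((l + 2 * m : ℤ) * τ / (2 * m)) : ℂ) = -τ + -(l * τ / (2 * m)) := by
    push_cast
    field_simp
    ring
  have hshift := hh.isMeanFourierCoeff hτ (l + 2 * m)
  rw [hline] at hshift
  have hmean := Tendsto.const_mul (ee ((l + m) * τ)) (hh.isMeanFourierCoeff hτ l)
  have heq := hshift.unique (hmean.congr fun ε => ?_)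
  · have hexp : ((l + m) * τ + l ^ 2 / (4 * m) * τ : ℂ) = (l + 2 * m : ℤ) ^ 2 / (4 * m) * τ := by
      push_cast
      field_simp
      ring
    rw [← mul_assoc, ← ee_add, hexp] at heq
    exact mul_left_cancel₀ (ee_ne_zero _) heq
  · rw [add_assoc, add_sub_assoc, hφ.lineCoeff_add_two_mul hτ, hφ.lineCoeff_add_two_mul hτ]
    ring

end CanonicalCoefficients

section AppellSum

variable {m : ℕ} {τ : ℂ}

lemma zpt_im (s : ℚ × ℚ) (τ : ℂ) : (zpt s τ).im = s.1 * τ.im := by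
  simp [zpt]

lemma zpt_add_intCast (s : ℚ × ℚ) (lam mu : ℤ) (τ : ℂ) :
    zpt (s.1 + (lam : ℚ), s.2 + (mu : ℚ)) τ = zpt s τ + lam * τ + mu := by
  simp only [zpt]
  push_cast
  ring

lemma zpt_injective (hτ : 0 < τ.im) : Function.Injective fun s => zpt s τ := by
  intro s t h
  have hfst : s.1 = t.1 := by
    have him := congrArg im h
    simp only [zpt_im] at him
    exact_mod_cast mul_right_cancel₀ hτ.ne' him
  refine Prod.ext hfst ?_
  simp only [zpt, hfst] at h
  exact_mod_cast add_left_cancel h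

lemma zpt_sub_zpt_mem_lattice_iff (hτ : 0 < τ.im) (s t : ℚ × ℚ) :
    zpt s τ - zpt t τ ∈ (unitPeriodPair hτ).lattice ↔
      ∃ lam mu : ℤ, s.1 = t.1 + (lam : ℚ) ∧ s.2 = t.2 + (mu : ℚ) := by
  refine (mem_lattice_unitPeriodPair hτ).trans (exists₂_congr fun lam mu => ?_)
  rw [sub_eq_iff_eq_add', ← add_assoc, ← zpt_add_intCast, (zpt_injective hτ).eq_iff, Prod.ext_iff]

lemma AppellA_eq (m : ℕ) (s : ℚ × ℚ) (τ z : ℂ) :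
    AppellA m s τ z = ee (-m * s.1 * zpt s τ) *
      Av m (appellKernel ((-(2 * m * s.1) : ℚ) : ℝ) (zpt s τ)) τ z :=
  rfl

lemma AppellA_periodic (m : ℕ) (s : ℚ × ℚ) (τ : ℂ) : Function.Periodic (AppellA m s τ) 1 :=
  fun z => by rw [AppellA_eq, AppellA_eq, Av_periodic]

lemma differentiableAt_AppellA (hm : 0 < m) (hτ : 0 < τ.im) {s : ℚ × ℚ} {z : ℂ}
    (hz : z - zpt s τ ∉ (unitPeriodPair hτ).lattice) : DifferentiableAt ℂ (AppellA m s τ) z := by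
  have hopen : IsOpen {z | z - zpt s τ ∉ (unitPeriodPair hτ).lattice} :=
    (unitPeriodPair hτ).isClosed_lattice.isOpen_compl.preimage (by fun_prop)
  exact ((differentiableOn_Av_appellKernel hm hτ _ _).const_mul _).differentiableAt
    (hopen.mem_nhds hz)

lemma tendsto_sub_mul_AppellA (hm : 0 < m) (hτ : 0 < τ.im) (s : ℚ × ℚ) :
    Tendsto (fun z => (z - zpt s τ) * AppellA m s τ z) (𝓝[≠] (zpt s τ))
      (𝓝 (ee (-m * s.1 * zpt s τ) * (2 * Real.pi * I)⁻¹)) :=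
  ((tendsto_sub_mul_Av_appellKernel hm hτ _ _).const_mul _).congr fun z => by
    rw [AppellA_eq, mul_left_comm]

lemma isMeanFourierCoeff_AppellA (hm : 0 < m) (hτ : 0 < τ.im) (s : ℚ × ℚ) (l : ℤ) :
    IsMeanFourierCoeff (AppellA m s τ) l (-(l * τ / (2 * m))) 0 := by
  have hc : ((-(2 * m * s.1) : ℚ) : ℝ) * τ.im = -(2 * m * (zpt s τ).im) := by
    rw [zpt_im]
    push_cast
    ring
  have h := (isMeanFourierCoeff_Av_appellKernel hm hτ hc l).const_mul (ee (-m * s.1 * zpt s τ))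
  rwa [mul_zero] at h

lemma AppellA_add_intCast (m : ℕ) (s : ℚ × ℚ) (lam mu : ℤ) (τ z : ℂ) :
    AppellA m (s.1 + (lam : ℚ), s.2 + (mu : ℚ)) τ z =
      ee (m * (lam * s.2 - s.1 * mu)) * AppellA m s τ z := by
  have hc : ((-(2 * m * (s.1 + (lam : ℚ))) : ℚ) : ℝ) =
      ((-(2 * m * s.1) : ℚ) : ℝ) - (2 * m * lam : ℤ) := by
    push_cast
    ring
  rw [AppellA_eq, AppellA_eq, zpt_add_intCast, hc, Av_appellKernel_shift, ← mul_assoc, ← mul_assoc,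
    ← ee_add, ← ee_add, ← ee_add_intCast _ (m * lam * mu)]
  congr 2
  simp only [zpt]
  push_cast
  ring

variable {S : Set (ℚ × ℚ)} {φ : ℂ → ℂ → ℂ} {D : ℚ × ℚ → ℂ → ℂ} {s : ℚ × ℚ}

lemma IsResidueFactor.tendsto_sub_mul (hD : IsResidueFactor m S φ D) (hτ : 0 < τ.im) (hs : s ∈ S) :
    Tendsto (fun z => (z - zpt s τ) * φ τ z) (𝓝[≠] (zpt s τ))
      (𝓝 (D s τ * (ee (-m * s.1 * zpt s τ) * (2 * Real.pi * I)⁻¹))) := by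
  have hne := mul_ne_zero two_pi_I_ne_zero (ee_ne_zero (m * s.1 * zpt s τ))
  convert (hD s hs τ hτ).const_mul (2 * Real.pi * I * ee (m * s.1 * zpt s τ))⁻¹ using 2
  · rw [inv_mul_cancel_left₀ hne]
  · rw [neg_mul, neg_mul, ee_neg, mul_inv]
    ring

lemma IsResidueFactor.apply_add_intCast (hφ : EllipticLaw m φ) (hD : IsResidueFactor m S φ D)
    (hτ : 0 < τ.im) (hs : s ∈ S) {lam mu : ℤ} (hs' : (s.1 + (lam : ℚ), s.2 + (mu : ℚ)) ∈ S) :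
    D (s.1 + (lam : ℚ), s.2 + (mu : ℚ)) τ = ee (-(m * (lam * s.2 - s.1 * mu))) * D s τ := by
  let r : ℂ := (2 * Real.pi * I)⁻¹
  have hr : r ≠ 0 := inv_ne_zero two_pi_I_ne_zero
  have hshift := hD.tendsto_sub_mul hτ hs'
  rw [zpt_add_intCast, add_assoc, ← map_add_right_nhdsNE, tendsto_map'_iff] at hshift
  have hmul : Tendsto (fun z => ee (-m * (lam ^ 2 * τ + 2 * lam * z))) (𝓝[≠] (zpt s τ))
      (𝓝 (ee (-m * (lam ^ 2 * τ + 2 * lam * zpt s τ)))) :=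
    (Continuous.tendsto (by fun_prop) _).mono_left nhdsWithin_le_nhds
  have heq := tendsto_nhds_unique hshift ((hmul.mul (hD.tendsto_sub_mul hτ hs)).congr fun z => ?_)
  · have hexp : ee (-m * (lam ^ 2 * τ + 2 * lam * zpt s τ)) * ee (-m * s.1 * zpt s τ) =
        ee (-m * (s.1 + (lam : ℚ) : ℚ) * (zpt s τ + (lam * τ + mu))) *
          ee (-(m * (lam * s.2 - s.1 * mu))) := by
      rw [← ee_add, ← ee_add, ← ee_add_intCast _ (-(m * lam * mu))]
      congr 1
      simp only [zpt]
      push_cast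
      ring
    refine mul_right_cancel₀ (mul_ne_zero (ee_ne_zero _) hr) (heq.trans ?_)
    linear_combination D s τ * r * hexp
  · rw [Function.comp_apply, ← add_assoc, hφ τ hτ]
    ring

lemma IsResidueFactor.mul_AppellA_add_intCast (hφ : EllipticLaw m φ)
    (hD : IsResidueFactor m S φ D) (hτ : 0 < τ.im) (hs : s ∈ S) {lam mu : ℤ}
    (hs' : (s.1 + (lam : ℚ), s.2 + (mu : ℚ)) ∈ S) (z : ℂ) :
    D (s.1 + (lam : ℚ), s.2 + (mu : ℚ)) τ * AppellA m (s.1 + (lam : ℚ), s.2 + (mu : ℚ)) τ z =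
      D s τ * AppellA m s τ z := by
  rw [hD.apply_add_intCast hφ hτ hs hs', AppellA_add_intCast, mul_mul_mul_comm, ← ee_add,
    neg_add_cancel, ee_zero, one_mul]

end AppellSum

section RemovableSingularities

/-- `f` with its removable singularities filled in: the value at `z` is the limit of `f` along the
punctured neighbourhoods of `z` (an arbitrary number where there is no limit). -/
def fillRemovable (f : ℂ → ℂ) (z : ℂ) : ℂ := limUnder (𝓝[≠] z) f

variable {f : ℂ → ℂ}

lemma fillRemovable_eq {z : ℂ} (hf : ContinuousAt f z) : fillRemovable f z = f z :=
  (hf.tendsto.mono_left nhdsWithin_le_nhds).limUnder_eq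

lemma fillRemovable_periodic {c : ℂ} (hf : Function.Periodic f c) :
    Function.Periodic (fillRemovable f) c := fun z => by
  rw [fillRemovable, limUnder, ← map_add_right_nhdsNE, map_map]
  exact congrArg (fun g => limUnder (𝓝[≠] z) g) (funext hf)

lemma tendsto_sub_mul_of_continuousAt {z₀ : ℂ} (hf : ContinuousAt f z₀) :
    Tendsto (fun z => (z - z₀) * f z) (𝓝[≠] z₀) (𝓝 0) := by
  have h : ContinuousAt (fun z => (z - z₀) * f z) z₀ := by fun_prop
  simpa using h.tendsto.mono_left (nhdsWithin_le_nhds (s := {z₀}ᶜ))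

lemma differentiable_fillRemovable
    (hd : ∀ z₀, ∀ᶠ z in 𝓝[≠] z₀, DifferentiableAt ℂ f z)
    (hres : ∀ z₀, ¬ DifferentiableAt ℂ f z₀ →
      Tendsto (fun z => (z - z₀) * f z) (𝓝[≠] z₀) (𝓝 0)) :
    Differentiable ℂ (fillRemovable f) := by
  intro z₀
  have hlim : Tendsto (fun z => (z - z₀) * f z) (𝓝[≠] z₀) (𝓝 0) := by
    by_cases hz : DifferentiableAt ℂ f z₀
    · exact tendsto_sub_mul_of_continuousAt hz.continuousAt
    · exact hres z₀ hz
  have hlittle : (fun z => f z - f z₀) =o[𝓝[≠] z₀] fun z => (z - z₀)⁻¹ := by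
    refine (Asymptotics.isLittleO_iff_tendsto' ?_).2 ?_
    · filter_upwards [self_mem_nhdsWithin] with z hz h
      exact absurd (sub_eq_zero.1 (inv_eq_zero.1 h)) hz
    · have h := hlim.sub (tendsto_sub_mul_of_continuousAt (continuousAt_const (y := f z₀)))
      rw [sub_zero] at h
      exact h.congr fun z => by rw [div_inv_eq_mul]; ring
  have hupdate := differentiableOn_update_limUnder_insert_of_isLittleO (hd z₀)
    (fun z hz => hz.differentiableWithinAt) hlittle
  have hnhds : insert z₀ {z | DifferentiableAt ℂ f z} ∈ 𝓝 z₀ := insert_mem_nhds_iff.2 (hd z₀)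
  refine (hupdate.differentiableAt hnhds).congr_of_eventuallyEq ?_
  filter_upwards [hnhds] with z hz
  obtain rfl | hne := eq_or_ne z z₀
  · rw [Function.update_self, fillRemovable]
  · rw [Function.update_of_ne hne]
    exact fillRemovable_eq (hz.resolve_left hne).continuousAt

end RemovableSingularities

section PolarPart

variable {m : ℕ} {τ : ℂ} {S : Set (ℚ × ℚ)} {T : Finset (ℚ × ℚ)} {φ : ℂ → ℂ → ℂ}
  {D : ℚ × ℚ → ℂ → ℂ}

/-- The polar part `∑_{t ∈ T} D_t(τ)·A^t_m(τ,z)` attached to a set `T` of representatives. -/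
def polarPart (m : ℕ) (D : ℚ × ℚ → ℂ → ℂ) (T : Finset (ℚ × ℚ)) (τ z : ℂ) : ℂ :=
  ∑ t ∈ T, D t τ * AppellA m t τ z

/-- The set of `z` which are not poles of `z ↦ polarPart m D T τ z`, that is, which lie outside all
the translated lattices `z_t + ℤτ + ℤ`. -/
def regularLocus (hτ : 0 < τ.im) (T : Finset (ℚ × ℚ)) : Set ℂ :=
  {z | ∀ t ∈ T, z - zpt t τ ∉ (unitPeriodPair hτ).lattice}

/-- The difference of `φ` and its polar part, extended over the poles. -/
def regularPart (m : ℕ) (φ : ℂ → ℂ → ℂ) (D : ℚ × ℚ → ℂ → ℂ) (T : Finset (ℚ × ℚ)) (τ : ℂ) : ℂ → ℂ :=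
  fillRemovable fun z => φ τ z - polarPart m D T τ z

lemma IsRepSet.mem_regularLocus_iff (hT : IsRepSet S T)
    (hS : ∀ s ∈ S, ∀ lam mu : ℤ, (s.1 + (lam : ℚ), s.2 + (mu : ℚ)) ∈ S) (hτ : 0 < τ.im) {z : ℂ} :
    z ∈ regularLocus hτ T ↔ ∀ s ∈ S, z ≠ zpt s τ := by
  refine ⟨fun hz s hs hzs => ?_, fun hz t ht hmem => ?_⟩
  · obtain ⟨t, ⟨ht, hts⟩, -⟩ := hT.2 s hs
    exact hz t ht (hzs ▸ (zpt_sub_zpt_mem_lattice_iff hτ s t).2 hts)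
  · obtain ⟨a, b, hab⟩ := (mem_lattice_unitPeriodPair hτ).1 hmem
    refine hz _ (hS t (hT.1 ht) a b) ?_
    rw [zpt_add_intCast, add_assoc, ← hab, add_sub_cancel]

lemma eventually_nhdsNE_sub_notMem_lattice (hτ : 0 < τ.im) (p z₀ : ℂ) :
    ∀ᶠ z in 𝓝[≠] z₀, z - p ∉ (unitPeriodPair hτ).lattice := by
  have hcont : Tendsto (fun z => z - p) (𝓝[≠] z₀) (𝓝 (z₀ - p)) :=
    (Continuous.tendsto (by fun_prop) _).mono_left nhdsWithin_le_nhds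
  filter_upwards [hcont ((unitPeriodPair hτ).compl_lattice_sdiff_singleton_mem_nhds (z₀ - p)),
    self_mem_nhdsWithin] with z hz hne hmem
  exact hz ⟨hmem, fun h => hne (sub_left_injective h)⟩

lemma eventually_nhdsNE_mem_regularLocus (hτ : 0 < τ.im) (T : Finset (ℚ × ℚ)) (z₀ : ℂ) :
    ∀ᶠ z in 𝓝[≠] z₀, z ∈ regularLocus hτ T :=
  (eventually_all_finset T).2 fun t _ => eventually_nhdsNE_sub_notMem_lattice hτ (zpt t τ) z₀

lemma eventually_nearLine_mem_regularLocus (hτ : 0 < τ.im) (T : Finset (ℚ × ℚ)) (w : ℂ) :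
    ∀ᶠ z in nearLine w, z ∈ regularLocus hτ T :=
  (eventually_all_finset T).2 fun t _ => eventually_nearLine_sub_notMem_lattice hτ w (zpt t τ)

lemma polarPart_periodic (m : ℕ) (D : ℚ × ℚ → ℂ → ℂ) (T : Finset (ℚ × ℚ)) (τ : ℂ) :
    Function.Periodic (polarPart m D T τ) 1 := fun z => by
  simp only [polarPart, AppellA_periodic m _ τ z]

lemma differentiableAt_polarPart (hm : 0 < m) (hτ : 0 < τ.im) {z : ℂ}
    (hz : z ∈ regularLocus hτ T) : DifferentiableAt ℂ (polarPart m D T τ) z :=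
  .fun_sum fun t ht => (differentiableAt_AppellA hm hτ (hz t ht)).const_mul _

lemma isMeanFourierCoeff_polarPart (hm : 0 < m) (hτ : 0 < τ.im) (l : ℤ) :
    IsMeanFourierCoeff (polarPart m D T τ) l (-(l * τ / (2 * m))) 0 := by
  have h : IsMeanFourierCoeff (polarPart m D T τ) l (-(l * τ / (2 * m))) (∑ t ∈ T, D t τ * 0) := by
    refine .finsetSum (fun t _ => (isMeanFourierCoeff_AppellA hm hτ t l).const_mul _) fun t _ => ?_
    exact (eventually_nearLine_sub_notMem_lattice hτ _ _).mono fun z hz =>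
      ((differentiableAt_AppellA hm hτ hz).const_mul _).continuousAt
  simpa using h

lemma polarPart_eq_add_erase (hφ : EllipticLaw m φ) (hD : IsResidueFactor m S φ D)
    (hτ : 0 < τ.im) (hT : ↑T ⊆ S) {s t : ℚ × ℚ} (hs : s ∈ S) (ht : t ∈ T)
    (hst : ∃ lam mu : ℤ, s.1 = t.1 + (lam : ℚ) ∧ s.2 = t.2 + (mu : ℚ)) (z : ℂ) :
    polarPart m D T τ z = D s τ * AppellA m s τ z + polarPart m D (T.erase t) τ z := by
  obtain ⟨lam, mu, h1, h2⟩ := hst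
  obtain rfl : s = (t.1 + (lam : ℚ), t.2 + (mu : ℚ)) := Prod.ext h1 h2
  rw [hD.mul_AppellA_add_intCast hφ hτ (hT ht) hs]
  exact (Finset.add_sum_erase T _ ht).symm

lemma tendsto_sub_mul_polarPart (hm : 0 < m) (hτ : 0 < τ.im) (hφ : EllipticLaw m φ)
    (hD : IsResidueFactor m S φ D) (hT : IsRepSet S T) {s : ℚ × ℚ} (hs : s ∈ S) :
    Tendsto (fun z => (z - zpt s τ) * polarPart m D T τ z) (𝓝[≠] (zpt s τ))
      (𝓝 (D s τ * (ee (-m * s.1 * zpt s τ) * (2 * Real.pi * I)⁻¹))) := by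
  obtain ⟨t, ⟨ht, hst⟩, huniq⟩ := hT.2 s hs
  have hother : zpt s τ ∈ regularLocus hτ (T.erase t) :=
    fun t' ht' hmem => Finset.ne_of_mem_erase ht'
      (huniq t' ⟨Finset.mem_of_mem_erase ht', (zpt_sub_zpt_mem_lattice_iff hτ s t').1 hmem⟩)
  have hrest := tendsto_sub_mul_of_continuousAt
    (differentiableAt_polarPart (D := D) hm hτ hother).continuousAt
  have hsum := ((tendsto_sub_mul_AppellA hm hτ s).const_mul (D s τ)).add hrest
  rw [add_zero] at hsum
  refine hsum.congr fun z => ?_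
  rw [polarPart_eq_add_erase hφ hD hτ hT.1 hs ht hst, mul_add, mul_left_comm]

end PolarPart

section RegularPart

variable {m : ℕ} {τ : ℂ} {S : Set (ℚ × ℚ)} {T : Finset (ℚ × ℚ)} {φ : ℂ → ℂ → ℂ}
  {D : ℚ × ℚ → ℂ → ℂ} {h : ℤ → ℂ → ℂ}

lemma EllipticLaw.periodic (hφ : EllipticLaw m φ) (hτ : 0 < τ.im) : Function.Periodic (φ τ) 1 :=
  fun z => by simpa using hφ τ hτ z 0 1

lemma regularPart_periodic (hφ : EllipticLaw m φ) (hτ : 0 < τ.im) :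
    Function.Periodic (regularPart m φ D T τ) 1 :=
  fillRemovable_periodic ((hφ.periodic hτ).sub (polarPart_periodic m D T τ))

lemma differentiableAt_sub_polarPart (hm : 0 < m) (hτ : 0 < τ.im)
    {z : ℂ} (hd : DifferentiableAt ℂ (φ τ) z) (hz : z ∈ regularLocus hτ T) :
    DifferentiableAt ℂ (fun z => φ τ z - polarPart m D T τ z) z :=
  hd.sub (differentiableAt_polarPart hm hτ hz)

lemma regularPart_eq (hm : 0 < m) (hτ : 0 < τ.im) {z : ℂ} (hd : DifferentiableAt ℂ (φ τ) z)
    (hz : z ∈ regularLocus hτ T) : regularPart m φ D T τ z = φ τ z - polarPart m D T τ z :=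
  fillRemovable_eq (differentiableAt_sub_polarPart hm hτ hd hz).continuousAt

lemma differentiable_regularPart (hm : 0 < m) (hτ : 0 < τ.im) (hT : IsRepSet S T)
    (hS : ∀ s ∈ S, ∀ lam mu : ℤ, (s.1 + (lam : ℚ), s.2 + (mu : ℚ)) ∈ S)
    (hφ : EllipticLaw m φ) (hd : ∀ z ∈ regularLocus hτ T, DifferentiableAt ℂ (φ τ) z)
    (hD : IsResidueFactor m S φ D) : Differentiable ℂ (regularPart m φ D T τ) := by
  have hdiff : ∀ z ∈ regularLocus hτ T,
      DifferentiableAt ℂ (fun z => φ τ z - polarPart m D T τ z) z :=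
    fun z hz => differentiableAt_sub_polarPart hm hτ (hd z hz) hz
  refine differentiable_fillRemovable
    (fun z₀ => (eventually_nhdsNE_mem_regularLocus hτ T z₀).mono hdiff) fun z₀ hz₀ => ?_
  obtain ⟨s, hs, rfl⟩ : ∃ s ∈ S, z₀ = zpt s τ := by
    contrapose! hz₀
    exact hdiff z₀ ((hT.mem_regularLocus_iff hS hτ).2 hz₀)
  have hres := (hD.tendsto_sub_mul hτ hs).sub (tendsto_sub_mul_polarPart hm hτ hφ hD hT hs)
  rw [sub_self] at hres
  exact hres.congr fun z => (mul_sub _ _ _).symm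

lemma lineCoeff_regularPart (hm : 0 < m) (hτ : 0 < τ.im)
    (hφ : EllipticLaw m φ) (hd : ∀ z ∈ regularLocus hτ T, DifferentiableAt ℂ (φ τ) z)
    (hψ : Differentiable ℂ (regularPart m φ D T τ)) (hh : IsCanonCoeff m φ h) (l : ℤ) :
    lineCoeff (regularPart m φ D T τ) l 0 = ee (l ^ 2 / (4 * m) * τ) * h l τ := by
  let w : ℂ := -(l * τ / (2 * m))
  have hoff := eventually_nearLine_mem_regularLocus hτ T w
  have hmean : IsMeanFourierCoeff (fun z => regularPart m φ D T τ z + polarPart m D T τ z) l w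
      (lineCoeff (regularPart m φ D T τ) l 0 + 0) :=
    (isMeanFourierCoeff_of_differentiable hψ (regularPart_periodic hφ hτ) l w).add
      (isMeanFourierCoeff_polarPart hm hτ l) (.of_forall fun z => (hψ z).continuousAt)
      (hoff.mono fun z hz => (differentiableAt_polarPart hm hτ hz).continuousAt)
  have hφψ : (fun z => regularPart m φ D T τ z + polarPart m D T τ z) =ᶠ[nearLine w] φ τ :=
    hoff.mono fun z hz => by simp only [regularPart_eq hm hτ (hd z hz) hz, sub_add_cancel]
  rw [add_zero] at hmean
  exact (hmean.congr hφψ).unique (hh.isMeanFourierCoeff hτ l)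

end RegularPart

section ThetaDecomposition

variable {m : ℕ} {τ : ℂ}

lemma ee_theta_eq_jacobiTheta₂_term (hm : 0 < m) (τ z : ℂ) (n : ℤ) :
    ee (n ^ 2 / (4 * m) * τ + n * z) = jacobiTheta₂_term n z (τ / (2 * m)) := by
  have hm' : (m : ℂ) ≠ 0 := by exact_mod_cast hm.ne'
  rw [jacobiTheta₂_term, ee]
  congr 1
  field_simp
  ring

lemma summable_ee_theta (hm : 0 < m) (hτ : 0 < τ.im) (z : ℂ) :
    Summable fun n : ℤ => ee (n ^ 2 / (4 * m) * τ + n * z) := by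
  simp only [ee_theta_eq_jacobiTheta₂_term hm]
  refine (summable_jacobiTheta₂_term_iff z _).2 ?_
  have h : τ / (2 * m) = ((2 * m : ℝ)⁻¹ : ℝ) * τ := by
    push_cast
    rw [div_eq_inv_mul]
  rw [h, im_ofReal_mul]
  positivity

lemma hasSum_periodic_mul {N : ℕ} (hN : N ≠ 0) {a f : ℤ → ℂ} (ha : Function.Periodic a N)
    (hf : Summable f) :
    HasSum (fun n => a n * f n) (∑ l ∈ Finset.range N, a l * ∑' k : ℤ, f (l + N * k)) := by
  have hN' : (N : ℤ) ≠ 0 := by exact_mod_cast hN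
  have hclass : ∀ l ∈ Finset.range N,
      HasSum (fun n : ℤ => if n % N = l then a n * f n else 0) (a l * ∑' k : ℤ, f (l + N * k)) := by
    intro l hl
    have hmod : ∀ k : ℤ, (l + N * k) % N = l := fun k => by
      rw [Int.add_mul_emod_self_left, Int.emod_eq_of_lt (by positivity)]
      exact_mod_cast Finset.mem_range.1 hl
    have hinj : Function.Injective fun k : ℤ => (l + N * k : ℤ) :=
      (add_right_injective _).comp (mul_right_injective₀ hN')
    have hvanish : ∀ n : ℤ, n ∉ Set.range (fun k : ℤ => (l + N * k : ℤ)) →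
        (if n % N = l then a n * f n else 0) = 0 :=
      fun n hn => if_neg fun h => hn ⟨n / N, by simp only [← h, Int.emod_add_mul_ediv]⟩
    have hperk : ∀ k : ℤ, a (l + N * k) = a l := fun k => by
      rw [mul_comm]
      exact ha.int_mul k l
    refine (hinj.hasSum_iff hvanish).1 ?_
    simpa only [Function.comp_def, hmod, if_true, hperk] using
      (hf.comp_injective hinj).hasSum.mul_left (a l)
  convert hasSum_sum hclass using 2 with n
  have hres : ((n % N).toNat : ℤ) = n % N := Int.toNat_of_nonneg (Int.emod_nonneg n hN')
  have hlt : n % N < N := Int.emod_lt_of_pos n (by positivity)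
  rw [Finset.sum_eq_single_of_mem (n % N).toNat (Finset.mem_range.2 (by omega)), if_pos hres.symm]
  exact fun l _ hl => if_neg fun h => hl (by omega)

lemma hasSum_finitePart (hm : 0 < m) (hτ : 0 < τ.im) {h : ℤ → ℂ → ℂ}
    (hper : ∀ l, h (l + 2 * m) τ = h l τ) (z : ℂ) :
    HasSum (fun n : ℤ => h n τ * ee (n ^ 2 / (4 * m) * τ + n * z)) (finitePart m h τ z) := by
  have hper' : Function.Periodic (fun l => h l τ) (2 * m : ℕ) := fun l => by
    exact_mod_cast hper l
  convert hasSum_periodic_mul (by positivity) hper' (summable_ee_theta hm hτ z) using 1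
  simp only [finitePart, jTheta]
  push_cast
  rfl

end ThetaDecomposition

section Decomposition

variable {m : ℕ} {τ : ℂ} {S : Set (ℚ × ℚ)} {T : Finset (ℚ × ℚ)} {φ : ℂ → ℂ → ℂ}
  {D : ℚ × ℚ → ℂ → ℂ} {h : ℤ → ℂ → ℂ}

lemma regularPart_eq_finitePart (hm : 0 < m) (hτ : 0 < τ.im) (hφ : EllipticLaw m φ)
    (hd : ∀ z ∈ regularLocus hτ T, DifferentiableAt ℂ (φ τ) z)
    (hψ : Differentiable ℂ (regularPart m φ D T τ)) (hh : IsCanonCoeff m φ h) (z : ℂ) :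
    regularPart m φ D T τ z = finitePart m h τ z := by
  have hper := regularPart_periodic (D := D) (T := T) hφ hτ
  have hcoeff : ∀ n : ℤ, lineCoeff (regularPart m φ D T τ) n z * ee (n * z) =
      h n τ * ee (n ^ 2 / (4 * m) * τ + n * z) := fun n => by
    rw [lineCoeff_eq_of_differentiable hψ hper n z 0,
      lineCoeff_regularPart hm hτ hφ hd hψ hh, ee_add]
    ring
  have htheta := hasSum_finitePart hm hτ (fun l => hφ.canonCoeff_add_two_mul hm hh hτ l) z
  simp only [← hcoeff] at htheta
  exact (hasSum_lineCoeff_mul_ee hψ.continuous hper z htheta.summable).unique htheta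

lemma eq_finitePart_add_polarPart (hm : 0 < m) (hτ : 0 < τ.im) (hT : IsRepSet S T)
    (hS : ∀ s ∈ S, ∀ lam mu : ℤ, (s.1 + (lam : ℚ), s.2 + (mu : ℚ)) ∈ S)
    (hφ : EllipticLaw m φ) (hd : ∀ z, (∀ s ∈ S, z ≠ zpt s τ) → DifferentiableAt ℂ (φ τ) z)
    (hD : IsResidueFactor m S φ D) (hh : IsCanonCoeff m φ h) {z : ℂ}
    (hz : ∀ s ∈ S, z ≠ zpt s τ) : φ τ z = finitePart m h τ z + polarPart m D T τ z := by
  have hmem {z : ℂ} : z ∈ regularLocus hτ T ↔ ∀ s ∈ S, z ≠ zpt s τ := hT.mem_regularLocus_iff hS hτ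
  have hd' : ∀ z ∈ regularLocus hτ T, DifferentiableAt ℂ (φ τ) z := fun z hz => hd z (hmem.1 hz)
  have hψ := differentiable_regularPart hm hτ hT hS hφ hd' hD
  rw [← regularPart_eq_finitePart hm hτ hφ hd' hψ hh, regularPart_eq hm hτ (hd z hz) (hmem.2 hz),
    sub_add_cancel]

lemma MeroJacobiForm.differentiableAt {k : ℤ} (Φ : MeroJacobiForm k m S) (hτ : 0 < τ.im) {z : ℂ}
    (hz : ∀ s ∈ S, z ≠ zpt s τ) : DifferentiableAt ℂ (Φ.toFun τ) z :=
  DifferentiableAt.comp (f := fun z : ℂ => (τ, z)) z (Φ.holo τ hτ z hz) (by fun_prop)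

end Decomposition

theorem meromorphic_jacobi_decomposition_simple_poles_general {m : ℕ} (hm : 0 < m)
    {S : Set (ℚ × ℚ)} (hS : ∀ s ∈ S, ∀ lam mu : ℤ, (s.1 + (lam : ℚ), s.2 + (mu : ℚ)) ∈ S)
    {φ : ℂ → ℂ → ℂ} (hφ : EllipticLaw m φ)
    (hd : ∀ τ : ℂ, 0 < τ.im → ∀ z, (∀ s ∈ S, z ≠ zpt s τ) → DifferentiableAt ℂ (φ τ) z)
    {h : ℤ → ℂ → ℂ} (hh : IsCanonCoeff m φ h)
    {D : ℚ × ℚ → ℂ → ℂ} (hD : IsResidueFactor m S φ D) :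
    (∀ l : ℤ, ∀ τ : ℂ, 0 < τ.im → h (l + 2 * (m : ℤ)) τ = h l τ) ∧
    (∀ s ∈ S, ∀ lam mu : ℤ, ∀ τ : ℂ, 0 < τ.im → ∀ z : ℂ,
      (∀ a b : ℤ, z ≠ zpt s τ + (a : ℂ) * τ + (b : ℂ)) →
      D (s.1 + (lam : ℚ), s.2 + (mu : ℚ)) τ * AppellA m (s.1 + (lam : ℚ), s.2 + (mu : ℚ)) τ z =
        D s τ * AppellA m s τ z) ∧
    (∀ T : Finset (ℚ × ℚ), IsRepSet S T → ∀ τ : ℂ, 0 < τ.im → ∀ z : ℂ,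
      (∀ s ∈ S, z ≠ zpt s τ) →
      φ τ z = finitePart m h τ z + ∑ t ∈ T, D t τ * AppellA m t τ z) :=
  ⟨fun l _ hτ => hφ.canonCoeff_add_two_mul hm hh hτ l,
    fun s hs lam mu _ hτ z _ => hD.mul_AppellA_add_intCast hφ hτ hs (hS s hs lam mu) z,
    fun _ hT τ hτ _ hz => eq_finitePart_add_polarPart hm hτ hT hS hφ (hd τ hτ) hD hh hz⟩

/-- Theorem (canonical decomposition, simple poles): a meromorphic Jacobi form of weight `k`
and index `m` with simple poles supported on `S` has `2m`-periodic canonical Fourier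
coefficients; the products `D_s·A^s_m` depend only on the class of `s` in `S/ℤ²`; and `φ`
equals its finite part plus `∑_{s ∈ S/ℤ²} D_s(τ)·A^s_m(τ,z)`. -/
theorem meromorphic_jacobi_decomposition_simple_poles (k : ℤ) (m : ℕ) (hm : 0 < m)
    (S : Set (ℚ × ℚ)) (Φ : MeroJacobiForm k m S) (hpoles : HasSimplePoles Φ)
    (h : ℤ → ℂ → ℂ) (hh : IsCanonCoeff m Φ.toFun h)
    (D : ℚ × ℚ → ℂ → ℂ) (hD : IsResidueFactor m S Φ.toFun D) :
    (∀ l : ℤ, ∀ τ : ℂ, 0 < τ.im → h (l + 2 * (m : ℤ)) τ = h l τ) ∧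
    (∀ s ∈ S, ∀ lam mu : ℤ, ∀ τ : ℂ, 0 < τ.im → ∀ z : ℂ,
      (∀ a b : ℤ, z ≠ zpt s τ + (a : ℂ) * τ + (b : ℂ)) →
      D (s.1 + (lam : ℚ), s.2 + (mu : ℚ)) τ * AppellA m (s.1 + (lam : ℚ), s.2 + (mu : ℚ)) τ z =
        D s τ * AppellA m s τ z) ∧
    (∀ T : Finset (ℚ × ℚ), IsRepSet S T → ∀ τ : ℂ, 0 < τ.im → ∀ z : ℂ,
      (∀ s ∈ S, z ≠ zpt s τ) →
      Φ.toFun τ z = finitePart m h τ z + ∑ t ∈ T, D t τ * AppellA m t τ z) :=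
  meromorphic_jacobi_decomposition_simple_poles_general hm Φ.lattice_inv Φ.elliptic
    (fun _ hτ _ => Φ.differentiableAt hτ) hh hD
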